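/- arXiv:2102.06817 — 2 statements merged into one kernel-verified Lean document; each statement's English description precedes it below -/
import Mathlib

section
/- Let X_1,…,X_n be i.i.d. N_p(0, Σ) Gaussian vectors with Σ ∈ F(s,S,σ) having diagonal value σ_0 > 0, where 1 ≤ s ≤ S < p/2, and let W ⊆ {1,…,S} have w ≥ 1 elements. Then for every K ∈ (0,1) and every u > 0, P[ Tr(A_W(Σ_n − Σ)) ≥ σ_0 · t̃ ] ≤ exp(−u/4), where, if w = 1, t̃ = max{ √(u/(1−K)) · √((2s+1)/(n(p−S))), (u/K)(2s+1)/(n(p−S)) }, and if w > 1, t̃ = (2s+1) · max{ √(u/(2(1−K))) · √(w/(n(p−S))), (u/K) · w/(n(p−S)) }. -/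
open MeasureTheory Matrix Real
open scoped ENNReal BigOperators NNReal

noncomputable def gaussianPDF {p : ℕ} (C : Matrix (Fin p) (Fin p) ℝ) (x : Fin p → ℝ) : ℝ≥0∞ :=
  ENNReal.ofReal ((2 * Real.pi) ^ (-(p : ℝ) / 2) * C.det ^ (-(1:ℝ)/2) *
    Real.exp (-(1/2) * (x ⬝ᵥ C⁻¹.mulVec x)))

/-- The centered multivariate Gaussian measure `N_p(0, C)` on `Fin p → ℝ`. -/
noncomputable def gaussianMeasure {p : ℕ} (C : Matrix (Fin p) (Fin p) ℝ) :
    Measure (Fin p → ℝ) :=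
  MeasureTheory.volume.withDensity (gaussianPDF C)

/-- The law of `n` i.i.d. `N_p(0, C)` vectors. -/
noncomputable def iidGaussian (n p : ℕ) (C : Matrix (Fin p) (Fin p) ℝ) :
    Measure (Fin n → Fin p → ℝ) :=
  MeasureTheory.volume.withDensity fun X => ∏ k, gaussianPDF C (X k)

/-- The sample covariance matrix `Σ_n = (1/n) ∑ X_k X_kᵀ`. -/
noncomputable def sampleCov {n p : ℕ} (X : Fin n → Fin p → ℝ) :
    Matrix (Fin p) (Fin p) ℝ :=
  (n : ℝ)⁻¹ • ∑ k, Matrix.of fun i j => X k i * X k j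

/-- Frobenius norm of a matrix. -/
noncomputable def frobNorm {p : ℕ} (M : Matrix (Fin p) (Fin p) ℝ) : ℝ :=
  Real.sqrt (∑ i, ∑ j, (M i j)^2)

/-- Spectral (ℓ²-operator) norm of a matrix. -/
noncomputable def specNorm {p : ℕ} (M : Matrix (Fin p) (Fin p) ℝ) : ℝ :=
  ‖Matrix.toEuclideanCLM (𝕜 := ℝ) M‖

/-- The matrix `A_j` with entries `1/(2(p-j))` on the `j`-th upper and lower diagonals. -/
noncomputable def lagMatrix (p j : ℕ) : Matrix (Fin p) (Fin p) ℝ :=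
  Matrix.of fun k l => if ((k:ℤ) - (l:ℤ)).natAbs = j then 1/(2*((p:ℝ) - j)) else 0

/-- Two-sided class `F(s,S,σ)` of sparse Toeplitz covariance matrices with
diagonal value `σ0`. -/
def memF (p s S : ℕ) (σ σ0 : ℝ) (C : Matrix (Fin p) (Fin p) ℝ) : Prop :=
  C.PosDef ∧ ∃ v : ℕ → ℝ, v 0 = σ0 ∧
    (∀ i j : Fin p, C i j = v ((i:ℤ) - (j:ℤ)).natAbs) ∧
    ∃ T : Finset ℕ, T ⊆ Finset.Icc 1 S ∧ T.card = s ∧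
      (∀ j ∈ T, σ ≤ |v j|) ∧ (∀ j, 1 ≤ j → j ≤ p - 1 → j ∉ T → v j = 0)

/-- One-sided class `F₊(s,S,σ)` of sparse Toeplitz covariance matrices with
diagonal value `σ0`. -/
def memFplus (p s S : ℕ) (σ σ0 : ℝ) (C : Matrix (Fin p) (Fin p) ℝ) : Prop :=
  C.PosDef ∧ ∃ v : ℕ → ℝ, v 0 = σ0 ∧
    (∀ i j : Fin p, C i j = v ((i:ℤ) - (j:ℤ)).natAbs) ∧
    ∃ T : Finset ℕ, T ⊆ Finset.Icc 1 S ∧ T.card = s ∧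
      (∀ j ∈ T, σ ≤ v j) ∧ (∀ j, 1 ≤ j → j ≤ p - 1 → j ∉ T → v j = 0)


open scoped MatrixOrder in
/-- Simultaneous reduction: a positive definite `C` and a symmetric `A` are brought by a single
congruence to the identity and to a diagonal matrix. -/
theorem exists_simultaneous_diagonalization {p : ℕ} {C A : Matrix (Fin p) (Fin p) ℝ}
    (hC : C.PosDef) (hA : Aᵀ = A) :
    ∃ (Q : Matrix (Fin p) (Fin p) ℝ) (d : Fin p → ℝ),
      Q * Qᵀ = C ∧ Qᵀ * A * Q = Matrix.diagonal d := by
  obtain ⟨y, hy⟩ := CStarAlgebra.nonneg_iff_eq_star_mul_self.mp hC.posSemidef.nonneg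
  rw [Matrix.star_eq_conjTranspose, Matrix.conjTranspose_eq_transpose_of_trivial] at hy
  have hB : (y * A * yᵀ).IsHermitian := by
    rw [Matrix.IsHermitian, Matrix.conjTranspose_eq_transpose_of_trivial]
    simp [Matrix.transpose_mul, hA, Matrix.mul_assoc]
  set U : Matrix (Fin p) (Fin p) ℝ := hB.eigenvectorUnitary.1
  have hU1 : Uᵀ * U = 1 := by
    have := Unitary.coe_star_mul_self hB.eigenvectorUnitary
    simpa [Matrix.star_eq_conjTranspose, Matrix.conjTranspose_eq_transpose_of_trivial] using this
  have hU2 : U * Uᵀ = 1 := mul_eq_one_comm.mp hU1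
  have hspec : y * A * yᵀ = U * Matrix.diagonal hB.eigenvalues * Uᵀ := by
    have := hB.spectral_theorem
    rw [Unitary.conjStarAlgAut_apply] at this
    simpa [Matrix.star_eq_conjTranspose, Matrix.conjTranspose_eq_transpose_of_trivial] using this
  refine ⟨yᵀ * U, hB.eigenvalues, ?_, ?_⟩
  · rw [Matrix.transpose_mul, Matrix.transpose_transpose, Matrix.mul_assoc, ← Matrix.mul_assoc U,
      hU2, Matrix.one_mul, hy]
  · calc (yᵀ * U)ᵀ * A * (yᵀ * U) = Uᵀ * (y * A * yᵀ) * U := by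
          simp [Matrix.transpose_mul, Matrix.mul_assoc]
      _ = (Uᵀ * U) * Matrix.diagonal hB.eigenvalues * (Uᵀ * U) := by
          conv_lhs => rw [hspec]
          simp [Matrix.mul_assoc]
      _ = _ := by simp [hU1]

/-- Tonelli's theorem for a product of functions of separate variables. -/
theorem lintegral_pi_prod_eq_prod {E : Type*} [MeasureSpace E] [SigmaFinite (volume : Measure E)]
    {n : ℕ} (f : Fin n → E → ℝ≥0∞) (hf : ∀ i, Measurable (f i)) :
    ∫⁻ x : Fin n → E, ∏ i, f i (x i) = ∏ i, ∫⁻ x, f i x := by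
  induction n with
  | zero => simp [volume_pi]
  | succ n ih =>
    calc ∫⁻ x : Fin (n + 1) → E, ∏ i, f i (x i)
        = ∫⁻ x : E × (Fin n → E), f 0 x.1 * ∏ i : Fin n, f i.succ (x.2 i) := by
          rw [← (volume_preserving_piFinSuccAbove (fun _ : Fin (n + 1) => E) 0).symm.lintegral_comp
            (by fun_prop)]
          simp_rw [MeasurableEquiv.piFinSuccAbove_symm_apply, Fin.insertNthEquiv,
            Fin.prod_univ_succ, Fin.insertNth_zero, Equiv.coe_fn_mk, Fin.cons_succ,
            cast_eq, Fin.cons_zero]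
      _ = _ := by
          rw [Fin.prod_univ_succ, ← ih (fun i => f i.succ) (fun i => hf _), Measure.volume_eq_prod,
            lintegral_prod_mul (g := fun y : Fin n → E => ∏ i, f (Fin.succ i) (y i))
              (hf 0).aemeasurable (Finset.measurable_prod _ fun i _ =>
                (hf i.succ).comp (measurable_pi_apply i)).aemeasurable]

/-- The second-order Taylor bound on the logarithm with constant uniform on `|x| ≤ K`. -/
theorem neg_log_one_sub_le {x K : ℝ} (hK : K < 1) (hx : |x| ≤ K) :
    -Real.log (1 - x) ≤ x + x ^ 2 / (2 * (1 - K)) := by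
  obtain ⟨h1, h2⟩ := abs_le.mp hx
  have hpos : 0 < 1 - x := by linarith
  rcases le_total 0 x with h | h
  · have hl : 0 ≤ Real.log (1 - x)⁻¹ := Real.log_nonneg (by
      rw [one_le_inv₀ hpos]; linarith)
    have := Real.self_le_sinh_iff.mpr hl
    rw [Real.sinh_log (inv_pos.mpr hpos), Real.log_inv, inv_inv] at this
    calc -Real.log (1 - x) ≤ ((1 - x)⁻¹ - (1 - x)) / 2 := this
      _ = x + x ^ 2 / (2 * (1 - x)) := by field_simp; ring
      _ ≤ x + x ^ 2 / (2 * (1 - K)) := by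
          gcongr
  · have := Real.le_log_one_add_of_nonneg (x := -x) (by linarith)
    rw [← sub_eq_add_neg] at this
    have h3 : -x - x ^ 2 / 2 ≤ 2 * -x / (-x + 2) := by
      rw [le_div_iff₀ (by linarith)]
      nlinarith [mul_nonneg (neg_nonneg.mpr h) (sq_nonneg x)]
    have h4 : x ^ 2 / 2 ≤ x ^ 2 / (2 * (1 - K)) := by
      apply div_le_div_of_nonneg_left (sq_nonneg x) (by linarith) (by linarith [abs_nonneg x])
    linarith

theorem lintegral_exp_mul_sq {b : ℝ} (hb : 0 < b) :
    ∫⁻ x : ℝ, ENNReal.ofReal (Real.exp (-b * x ^ 2)) = ENNReal.ofReal √(π / b) := by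
  rw [← integral_gaussian, ofReal_integral_eq_lintegral_ofReal (integrable_exp_neg_mul_sq hb)
    (Filter.Eventually.of_forall fun x => (Real.exp_pos _).le)]

theorem lintegral_comp_mulVec {p : ℕ} {Q : Matrix (Fin p) (Fin p) ℝ} (hQ : Q.det ≠ 0)
    {g : (Fin p → ℝ) → ℝ≥0∞} (hg : Measurable g) :
    ∫⁻ x, g x = ENNReal.ofReal |Q.det| * ∫⁻ z, g (Q *ᵥ z) := by
  have hm : Measurable (Matrix.toLin' Q) :=
    (LinearMap.continuous_of_finiteDimensional _).measurable
  have h : ∫⁻ z, g (Q *ᵥ z) = ENNReal.ofReal |Q.det⁻¹| * ∫⁻ x, g x := by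
    have := lintegral_map (μ := volume) hg hm
    rw [Real.map_matrix_volume_pi_eq_smul_volume_pi hQ, lintegral_smul_measure] at this
    simpa using this.symm
  rw [h, ← mul_assoc, ← ENNReal.ofReal_mul (abs_nonneg _), ← abs_mul, mul_inv_cancel₀ hQ]
  simp

theorem measurable_gaussianPDF {p : ℕ} (C : Matrix (Fin p) (Fin p) ℝ) :
    Measurable (gaussianPDF C) := by
  unfold gaussianPDF dotProduct Matrix.mulVec dotProduct
  fun_prop

theorem det_ne_zero_of_mul_transpose_posDef {p : ℕ} {C Q : Matrix (Fin p) (Fin p) ℝ}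
    (hC : C.PosDef) (hQ : Q * Qᵀ = C) : Q.det ≠ 0 := by
  intro h
  have := hC.det_pos
  rw [← hQ, Matrix.det_mul, h] at this
  simp at this

theorem transpose_mul_inv_mul {p : ℕ} {C Q : Matrix (Fin p) (Fin p) ℝ}
    (hC : C.PosDef) (hQ : Q * Qᵀ = C) : Qᵀ * C⁻¹ * Q = 1 := by
  have hdet : IsUnit Q.det := isUnit_iff_ne_zero.mpr (det_ne_zero_of_mul_transpose_posDef hC hQ)
  have hdetT : IsUnit Qᵀ.det := by rwa [Matrix.det_transpose]
  rw [← hQ, Matrix.mul_inv_rev, ← Matrix.mul_assoc, Matrix.mul_nonsing_inv _ hdetT, Matrix.one_mul,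
    Matrix.nonsing_inv_mul _ hdet]

theorem mulVec_dotProduct_mulVec_mulVec {p : ℕ} (Q A : Matrix (Fin p) (Fin p) ℝ)
    (z : Fin p → ℝ) : (Q *ᵥ z) ⬝ᵥ (A *ᵥ (Q *ᵥ z)) = z ⬝ᵥ ((Qᵀ * A * Q) *ᵥ z) := by
  rw [← Matrix.mulVec_mulVec, ← Matrix.mulVec_mulVec, Matrix.dotProduct_mulVec z,
    Matrix.vecMul_transpose]

/-- Exponential moments of a Gaussian quadratic form. -/
theorem lintegral_exp_quadratic_mul_gaussianPDF {p : ℕ} {C A Q : Matrix (Fin p) (Fin p) ℝ}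
    {d : Fin p → ℝ} (hC : C.PosDef) (hQ : Q * Qᵀ = C) (hd : Qᵀ * A * Q = Matrix.diagonal d)
    {t : ℝ} (ht : ∀ i, 2 * t * d i < 1) :
    ∫⁻ x, ENNReal.ofReal (Real.exp (t * (x ⬝ᵥ (A *ᵥ x)))) * gaussianPDF C x
      = ENNReal.ofReal (∏ i, √(1 / (1 - 2 * t * d i))) := by
  have hdetQ := det_ne_zero_of_mul_transpose_posDef hC hQ
  have hdetC : C.det = |Q.det| ^ 2 := by
    rw [← hQ, Matrix.det_mul, Matrix.det_transpose, sq_abs, sq]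
  have habs : 0 < |Q.det| := abs_pos.mpr hdetQ
  rw [lintegral_comp_mulVec hdetQ (by
    refine Measurable.mul ?_ (measurable_gaussianPDF C)
    unfold dotProduct Matrix.mulVec dotProduct
    fun_prop)]
  have hpt : ∀ z : Fin p → ℝ,
      ENNReal.ofReal (Real.exp (t * ((Q *ᵥ z) ⬝ᵥ (A *ᵥ (Q *ᵥ z))))) * gaussianPDF C (Q *ᵥ z)
        = ENNReal.ofReal ((2 * π) ^ (-(p : ℝ) / 2) * C.det ^ (-(1:ℝ)/2)) *
          ∏ i, ENNReal.ofReal (Real.exp (-(1 / 2 - t * d i) * z i ^ 2)) := by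
    intro z
    have hc : 0 ≤ (2 * π) ^ (-(p : ℝ) / 2) * C.det ^ (-(1:ℝ)/2) :=
      mul_nonneg (by positivity) (Real.rpow_nonneg hC.det_pos.le _)
    rw [gaussianPDF, mulVec_dotProduct_mulVec_mulVec, mulVec_dotProduct_mulVec_mulVec, hd,
      transpose_mul_inv_mul hC hQ, ← ENNReal.ofReal_prod_of_nonneg
        (fun i _ => (Real.exp_pos _).le), ← ENNReal.ofReal_mul (Real.exp_pos _).le,
      ← ENNReal.ofReal_mul hc, mul_left_comm, ← Real.exp_add, ← Real.exp_sum]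
    congr 3
    simp only [dotProduct, Matrix.mulVec_diagonal, Matrix.one_mulVec, Finset.mul_sum,
      ← Finset.sum_add_distrib]
    exact Finset.sum_congr rfl fun i _ => by ring
  simp_rw [hpt]
  rw [lintegral_const_mul _ (by fun_prop),
    lintegral_pi_prod_eq_prod (fun i y => ENNReal.ofReal (Real.exp (-(1 / 2 - t * d i) * y ^ 2)))
      (fun i => by fun_prop)]
  have h1d : ∀ i, 0 < 1 / 2 - t * d i := fun i => by linarith [ht i]
  simp_rw [lintegral_exp_mul_sq (h1d _)]
  rw [← ENNReal.ofReal_prod_of_nonneg (fun i _ => Real.sqrt_nonneg _),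
    ← ENNReal.ofReal_mul (mul_nonneg (by positivity) (Real.rpow_nonneg hC.det_pos.le _)),
    ← ENNReal.ofReal_mul habs.le]
  congr 1
  have hsplit : ∀ i, √(π / (1 / 2 - t * d i)) = √(2 * π) * √(1 / (1 - 2 * t * d i)) := by
    intro i
    rw [← Real.sqrt_mul (by positivity)]
    congr 1
    have := (h1d i).ne'
    have : 1 - 2 * t * d i ≠ 0 := by linarith [ht i]
    field_simp
  simp_rw [hsplit]
  rw [Finset.prod_mul_distrib, Finset.prod_const, Finset.card_univ, Fintype.card_fin]
  have hdet : C.det ^ (-(1:ℝ)/2) = |Q.det|⁻¹ := by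
    rw [hdetC, ← Real.rpow_natCast, ← Real.rpow_mul habs.le, ← Real.rpow_neg_one]
    norm_num
  have hpi : (2 * π) ^ (-(p : ℝ) / 2) * √(2 * π) ^ p = 1 := by
    rw [Real.sqrt_eq_rpow, ← Real.rpow_natCast, ← Real.rpow_mul (by positivity),
      ← Real.rpow_add (by positivity)]
    ring_nf
    simp
  rw [hdet]
  calc |Q.det| * ((2 * π) ^ (-(p : ℝ) / 2) * |Q.det|⁻¹
          * (√(2 * π) ^ p * ∏ i, √(1 / (1 - 2 * t * d i))))
      = (|Q.det| * |Q.det|⁻¹) * ((2 * π) ^ (-(p : ℝ) / 2) * √(2 * π) ^ p)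
          * ∏ i, √(1 / (1 - 2 * t * d i)) := by ring
    _ = _ := by rw [mul_inv_cancel₀ habs.ne', hpi]; ring

theorem sqrt_one_div_one_sub_le {x K : ℝ} (hK : K < 1) (hx : |x| ≤ K) :
    √(1 / (1 - x)) ≤ Real.exp (x / 2 + x ^ 2 / (4 * (1 - K))) := by
  have hpos : 0 < 1 - x := by linarith [(abs_le.mp hx).2]
  rw [Real.sqrt_le_left (Real.exp_pos _).le, ← Real.exp_nat_mul, one_div,
    ← Real.exp_log (inv_pos.mpr hpos), Real.log_inv]
  apply Real.exp_le_exp.mpr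
  refine (neg_log_one_sub_le hK hx).trans (le_of_eq ?_)
  have : 1 - K ≠ 0 := by linarith
  push_cast
  field_simp
  ring

theorem trace_mul_eq_sum_of_congr_diagonal {p : ℕ} {C A Q : Matrix (Fin p) (Fin p) ℝ}
    {d : Fin p → ℝ} (hQ : Q * Qᵀ = C) (hd : Qᵀ * A * Q = Matrix.diagonal d) :
    (A * C).trace = ∑ i, d i := by
  rw [← Matrix.trace_diagonal, ← hd, ← hQ, Matrix.mul_assoc, Matrix.trace_mul_comm Qᵀ,
    Matrix.mul_assoc]

theorem trace_mul_sq_eq_sum_of_congr_diagonal {p : ℕ} {C A Q : Matrix (Fin p) (Fin p) ℝ}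
    {d : Fin p → ℝ} (hQ : Q * Qᵀ = C) (hd : Qᵀ * A * Q = Matrix.diagonal d) :
    (A * C * (A * C)).trace = ∑ i, d i ^ 2 := by
  have h : (Qᵀ * A * Q) * (Qᵀ * A * Q) = Matrix.diagonal fun i => d i ^ 2 := by
    rw [hd, Matrix.diagonal_mul_diagonal]
    simp_rw [sq]
  rw [← Matrix.trace_diagonal, ← h, ← hQ]
  calc (A * (Q * Qᵀ) * (A * (Q * Qᵀ))).trace = ((A * Q * Qᵀ * A * Q) * Qᵀ).trace := by
        simp only [Matrix.mul_assoc]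
    _ = _ := by
        rw [Matrix.trace_mul_comm]
        simp only [Matrix.mul_assoc]

/-- The diagonal entries are eigenvalues of `A * C`, hence bounded by its absolute row sums. -/
theorem abs_le_of_congr_diagonal {p : ℕ} {C A Q : Matrix (Fin p) (Fin p) ℝ}
    {d : Fin p → ℝ} (hC : C.PosDef) (hQ : Q * Qᵀ = C) (hd : Qᵀ * A * Q = Matrix.diagonal d)
    {L : ℝ} (hL : ∀ k, ∑ l, |(A * C) k l| ≤ L) (i : Fin p) : |d i| ≤ L := by
  have hdetT : IsUnit Qᵀ.det := by
    rw [Matrix.det_transpose]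
    exact isUnit_iff_ne_zero.mpr (det_ne_zero_of_mul_transpose_posDef hC hQ)
  set R := (Qᵀ)⁻¹
  have hQR : Qᵀ * R = 1 := Matrix.mul_nonsing_inv _ hdetT
  have hRQ : R * Qᵀ = 1 := Matrix.nonsing_inv_mul _ hdetT
  have hmul : A * C * R = R * Matrix.diagonal d := by
    rw [← hd, ← hQ]
    calc A * (Q * Qᵀ) * R = A * Q * (Qᵀ * R) := by simp only [Matrix.mul_assoc]
      _ = (R * Qᵀ) * (A * Q) := by rw [hQR, hRQ]; simp
      _ = _ := by simp only [Matrix.mul_assoc]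
  obtain ⟨k, -, hk⟩ := Finset.exists_max_image Finset.univ (fun k => |R k i|) ⟨i, Finset.mem_univ _⟩
  have hkpos : 0 < |R k i| := by
    by_contra hcon
    have hz : ∀ l, R l i = 0 := fun l => abs_nonpos_iff.mp
      ((hk l (Finset.mem_univ _)).trans (not_lt.mp hcon))
    have := congrFun (congrFun hQR i) i
    simp [Matrix.mul_apply, hz] at this
  have hentry := congrFun (congrFun hmul k) i
  rw [Matrix.mul_diagonal, Matrix.mul_apply] at hentry
  have : |d i| * |R k i| ≤ L * |R k i| := by
    calc |d i| * |R k i| = |∑ l, (A * C) k l * R l i| := by rw [hentry, abs_mul, mul_comm]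
      _ ≤ ∑ l, |(A * C) k l| * |R l i| := by
          simpa only [abs_mul] using
            Finset.abs_sum_le_sum_abs (fun l => (A * C) k l * R l i) Finset.univ
      _ ≤ ∑ l, |(A * C) k l| * |R k i| := by
          exact Finset.sum_le_sum fun l _ =>
            mul_le_mul_of_nonneg_left (hk l (Finset.mem_univ _)) (abs_nonneg _)
      _ = (∑ l, |(A * C) k l|) * |R k i| := by rw [Finset.sum_mul]
      _ ≤ L * |R k i| := by gcongr; exact hL k
  exact le_of_mul_le_mul_right this hkpos

/-- Sub-gamma bound on the exponential moments of a Gaussian quadratic form. -/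
theorem lintegral_exp_quadratic_mul_gaussianPDF_le {p : ℕ} {C A : Matrix (Fin p) (Fin p) ℝ}
    (hC : C.PosDef) (hA : Aᵀ = A) {L V K t : ℝ} (hL : ∀ k, ∑ l, |(A * C) k l| ≤ L)
    (hV : (A * C * (A * C)).trace ≤ V) (hK : K < 1) (ht : 0 ≤ t) (htL : 2 * t * L ≤ K) :
    ∫⁻ x, ENNReal.ofReal (Real.exp (t * (x ⬝ᵥ (A *ᵥ x)))) * gaussianPDF C x
      ≤ ENNReal.ofReal (Real.exp (t * (A * C).trace + t ^ 2 * V / (1 - K))) := by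
  obtain ⟨Q, d, hQ, hd⟩ := exists_simultaneous_diagonalization hC hA
  have habs : ∀ i, |2 * t * d i| ≤ K := fun i => by
    rw [abs_mul, abs_of_nonneg (by positivity : 0 ≤ 2 * t)]
    exact (mul_le_mul_of_nonneg_left (abs_le_of_congr_diagonal hC hQ hd hL i)
      (by positivity)).trans htL
  rw [lintegral_exp_quadratic_mul_gaussianPDF hC hQ hd
    (fun i => ((abs_le.mp (habs i)).2.trans_lt hK))]
  apply ENNReal.ofReal_le_ofReal
  have h1K : 0 < 1 - K := by linarith
  calc ∏ i, √(1 / (1 - 2 * t * d i))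
      ≤ ∏ i, Real.exp (2 * t * d i / 2 + (2 * t * d i) ^ 2 / (4 * (1 - K))) :=
        Finset.prod_le_prod (fun i _ => Real.sqrt_nonneg _)
          fun i _ => sqrt_one_div_one_sub_le hK (habs i)
    _ = Real.exp (t * ∑ i, d i + t ^ 2 * (∑ i, d i ^ 2) / (1 - K)) := by
        rw [← Real.exp_sum, Finset.mul_sum, Finset.mul_sum, Finset.sum_div,
          ← Finset.sum_add_distrib]
        congr 1
        refine Finset.sum_congr rfl fun i _ => ?_
        field_simp
        ring
    _ ≤ _ := by
        rw [← trace_mul_eq_sum_of_congr_diagonal hQ hd,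
          ← trace_mul_sq_eq_sum_of_congr_diagonal hQ hd]
        gcongr

theorem trace_mul_of_mul {p : ℕ} (A : Matrix (Fin p) (Fin p) ℝ) (x : Fin p → ℝ) :
    (A * Matrix.of fun i j => x i * x j).trace = x ⬝ᵥ (A *ᵥ x) := by
  simp only [Matrix.trace, Matrix.diag_apply, Matrix.mul_apply, Matrix.of_apply, dotProduct,
    Matrix.mulVec, Finset.mul_sum]
  exact Finset.sum_congr rfl fun i _ => Finset.sum_congr rfl fun j _ => by ring

theorem trace_mul_sampleCov_sub {n p : ℕ} (A C : Matrix (Fin p) (Fin p) ℝ)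
    (X : Fin n → Fin p → ℝ) :
    (A * (sampleCov X - C)).trace = (n : ℝ)⁻¹ * ∑ k, X k ⬝ᵥ (A *ᵥ X k) - (A * C).trace := by
  rw [sampleCov, Matrix.mul_sub, Matrix.trace_sub, Matrix.mul_smul, Matrix.trace_smul,
    Matrix.mul_sum, Matrix.trace_sum, smul_eq_mul]
  simp_rw [trace_mul_of_mul]

theorem measurable_dotProduct_mulVec {p : ℕ} (A : Matrix (Fin p) (Fin p) ℝ) :
    Measurable fun y : Fin p → ℝ => y ⬝ᵥ (A *ᵥ y) := by
  unfold dotProduct Matrix.mulVec dotProduct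
  fun_prop

theorem measurableSet_trace_mul_sampleCov_sub_ge {n p : ℕ} (A C : Matrix (Fin p) (Fin p) ℝ)
    (x : ℝ) :
    MeasurableSet {X : Fin n → Fin p → ℝ | (A * (sampleCov X - C)).trace ≥ x} := by
  have h : Measurable fun X : Fin n → Fin p → ℝ => (A * (sampleCov X - C)).trace := by
    simp_rw [trace_mul_sampleCov_sub]
    refine ((Finset.measurable_sum _ fun k _ => ?_).const_mul _).sub_const _
    exact (measurable_dotProduct_mulVec A).comp (measurable_pi_apply k)
  exact measurableSet_le measurable_const h

/-- Exponential tilting of a product density on the deviation event. -/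
theorem prod_le_ofReal_exp_mul_prod_of_trace_ge {n p : ℕ} (hn : 0 < n)
    {A C : Matrix (Fin p) (Fin p) ℝ} (f : (Fin p → ℝ) → ℝ≥0∞) {t x : ℝ} (ht : 0 ≤ t)
    {X : Fin n → Fin p → ℝ} (hX : x ≤ (A * (sampleCov X - C)).trace) :
    ∏ k, f (X k) ≤ ENNReal.ofReal (Real.exp (-(t * n * (x + (A * C).trace)))) *
      ∏ k, (ENNReal.ofReal (Real.exp (t * (X k ⬝ᵥ (A *ᵥ X k)))) * f (X k)) := by
  have hn' : (n : ℝ) ≠ 0 := by positivity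
  rw [trace_mul_sampleCov_sub] at hX
  rw [Finset.prod_mul_distrib, ← mul_assoc,
    ← ENNReal.ofReal_prod_of_nonneg (fun k _ => (Real.exp_pos _).le),
    ← ENNReal.ofReal_mul (Real.exp_pos _).le, ← Real.exp_sum, ← Real.exp_add]
  refine le_mul_of_one_le_left' ?_
  rw [ENNReal.one_le_ofReal, Real.one_le_exp_iff, ← Finset.mul_sum]
  have : x + (A * C).trace ≤ (n : ℝ)⁻¹ * ∑ k, X k ⬝ᵥ (A *ᵥ X k) := by linarith
  have h2 := mul_le_mul_of_nonneg_left this (by positivity : 0 ≤ t * n)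
  have h3 : t * n * ((n : ℝ)⁻¹ * ∑ k, X k ⬝ᵥ (A *ᵥ X k)) = t * ∑ k, X k ⬝ᵥ (A *ᵥ X k) := by
    field_simp
  linarith

/-- Chernoff bound for the centred empirical quadratic form. -/
theorem iidGaussian_trace_ge_le {n p : ℕ} (hn : 0 < n) {C A : Matrix (Fin p) (Fin p) ℝ}
    (hC : C.PosDef) (hA : Aᵀ = A) {L V K t : ℝ} (hL : ∀ k, ∑ l, |(A * C) k l| ≤ L)
    (hV : (A * C * (A * C)).trace ≤ V) (hK : K < 1) (ht : 0 ≤ t) (htL : 2 * t * L ≤ K) (x : ℝ) :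
    iidGaussian n p C {X | (A * (sampleCov X - C)).trace ≥ x}
      ≤ ENNReal.ofReal (Real.exp (-(n * (t * x - t ^ 2 * V / (1 - K))))) := by
  have hmeas := measurableSet_trace_mul_sampleCov_sub_ge (n := n) A C x
  have hint := lintegral_exp_quadratic_mul_gaussianPDF_le hC hA hL hV hK ht htL
  have hpt := fun (X : Fin n → Fin p → ℝ) (hX : x ≤ (A * (sampleCov X - C)).trace) =>
    prod_le_ofReal_exp_mul_prod_of_trace_ge hn (gaussianPDF C) ht hX
  have hgm : Measurable fun y : Fin p → ℝ =>
      ENNReal.ofReal (Real.exp (t * (y ⬝ᵥ (A *ᵥ y)))) * gaussianPDF C y :=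
    ((measurable_dotProduct_mulVec A).const_mul t).exp.ennreal_ofReal.mul
      (measurable_gaussianPDF C)
  have hconst : ENNReal.ofReal (Real.exp (-(t * n * (x + (A * C).trace)))) *
      ENNReal.ofReal (Real.exp (t * (A * C).trace + t ^ 2 * V / (1 - K))) ^ n
        = ENNReal.ofReal (Real.exp (-(n * (t * x - t ^ 2 * V / (1 - K))))) := by
    rw [← ENNReal.ofReal_pow (Real.exp_pos _).le, ← ENNReal.ofReal_mul (Real.exp_pos _).le,
      ← Real.exp_nat_mul, ← Real.exp_add]
    congr 2
    ring
  rw [← hconst, iidGaussian, withDensity_apply _ hmeas]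
  refine (setLIntegral_mono' hmeas hpt).trans ((setLIntegral_le_lintegral _ _).trans ?_)
  rw [lintegral_const_mul' _ _ ENNReal.ofReal_ne_top,
    lintegral_pi_prod_eq_prod (fun _ y => ENNReal.ofReal (Real.exp (t * (y ⬝ᵥ (A *ᵥ y)))) *
      gaussianPDF C y) (fun _ => hgm), Finset.prod_const, Finset.card_univ, Fintype.card_fin]
  gcongr

/-- Bernstein-type deviation bound for the centred empirical quadratic form. -/
theorem iidGaussian_trace_ge_le_exp_neg {n p : ℕ} (hn : 0 < n) {C A : Matrix (Fin p) (Fin p) ℝ}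
    (hC : C.PosDef) (hA : Aᵀ = A) {L V K u x : ℝ} (hL : ∀ k, ∑ l, |(A * C) k l| ≤ L)
    (hV : (A * C * (A * C)).trace ≤ V) (hL0 : 0 < L) (hV0 : 0 < V) (hK : K ∈ Set.Ioo (0:ℝ) 1)
    (hu : 0 < u) (hxV : √(u / (1 - K)) * √(V / n) ≤ x) (hxL : u / K * L / n ≤ x) :
    iidGaussian n p C {X | (A * (sampleCov X - C)).trace ≥ x}
      ≤ ENNReal.ofReal (Real.exp (-u / 4)) := by
  obtain ⟨hK0, hK1⟩ := hK
  have h1K : 0 < 1 - K := by linarith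
  have hn' : (0 : ℝ) < n := by positivity
  have hx0 : 0 < x := lt_of_lt_of_le (by positivity) hxL
  suffices h : ∃ t, 0 ≤ t ∧ 2 * t * L ≤ K ∧ u / 4 ≤ n * (t * x - t ^ 2 * V / (1 - K)) by
    obtain ⟨t, ht, htL, hle⟩ := h
    refine (iidGaussian_trace_ge_le hn hC hA hL hV hK1 ht htL x).trans ?_
    exact ENNReal.ofReal_le_ofReal (Real.exp_le_exp.mpr (by linarith))
  rcases le_total (2 * (x * (1 - K) / (2 * V)) * L) K with hle | hle
  · refine ⟨x * (1 - K) / (2 * V), by positivity, hle, ?_⟩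
    have hsq : u / (1 - K) * (V / n) ≤ x ^ 2 := by
      rw [← Real.sqrt_mul (by positivity)] at hxV
      exact (Real.sqrt_le_left hx0.le).mp hxV
    have heq : n * (x * (1 - K) / (2 * V) * x - (x * (1 - K) / (2 * V)) ^ 2 * V / (1 - K))
        = n * (1 - K) / (4 * V) * x ^ 2 := by
      field_simp
      ring
    rw [heq]
    calc u / 4 = n * (1 - K) / (4 * V) * (u / (1 - K) * (V / n)) := by field_simp
      _ ≤ _ := by gcongr
  · refine ⟨K / (2 * L), by positivity, le_of_eq (by field_simp), ?_⟩
    have htV : K / (2 * L) * V / (1 - K) ≤ x / 2 := by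
      have h : K / (2 * L) ≤ x * (1 - K) / (2 * V) := by
        rw [div_le_iff₀ (by positivity)]
        linarith
      calc K / (2 * L) * V / (1 - K) ≤ x * (1 - K) / (2 * V) * V / (1 - K) := by gcongr
        _ = x / 2 := by field_simp
    calc u / 4 = n * (K / (4 * L)) * (u / K * L / n) := by field_simp
      _ ≤ n * (K / (4 * L)) * x := by gcongr
      _ = n * (K / (2 * L) * (x - x / 2)) := by field_simp; ring
      _ ≤ n * (K / (2 * L) * (x - K / (2 * L) * V / (1 - K))) := by gcongr
      _ = _ := by ring

theorem card_filter_natAbs_sub_eq_le_two {p : ℕ} (k : Fin p) (j : ℕ) :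
    (Finset.univ.filter fun l : Fin p => ((k:ℤ) - (l:ℤ)).natAbs = j).card ≤ 2 := by
  refine le_trans (Finset.card_le_card_of_injOn (t := ({(k:ℤ) + j, (k:ℤ) - j} : Finset ℤ))
    (fun l : Fin p => (l:ℤ)) ?_ ?_) Finset.card_le_two
  · intro l hl
    simp at hl ⊢
    omega
  · intro l _ m _ h
    simp only [Nat.cast_inj] at h
    exact Fin.ext h

theorem card_filter_natAbs_sub_eq_zero_le_one {p : ℕ} (k : Fin p) :
    (Finset.univ.filter fun l : Fin p => ((k:ℤ) - (l:ℤ)).natAbs = 0).card ≤ 1 := by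
  rw [Finset.card_le_one]
  intro a ha b hb
  simp at ha hb
  exact Fin.ext (by omega)

theorem card_filter_prod_natAbs_sub_eq_le {p j : ℕ} (hj : 1 ≤ j) :
    (Finset.univ.filter fun x : Fin p × Fin p => ((x.1:ℤ) - (x.2:ℤ)).natAbs = j).card
      ≤ 2 * (p - j) := by
  have hcard : (Finset.range (p - j) ×ˢ (Finset.univ : Finset Bool)).card = 2 * (p - j) := by
    simp [mul_comm]
  rw [← hcard]
  refine Finset.card_le_card_of_injOn
    (fun x => (min (x.1 : ℕ) (x.2 : ℕ), decide ((x.1 : ℕ) < (x.2 : ℕ)))) ?_ ?_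
  · rintro ⟨k, l⟩ hkl
    simp at hkl ⊢
    omega
  · rintro ⟨k, l⟩ hkl ⟨k', l'⟩ hkl' h
    simp at hkl hkl' h
    ext <;> simp <;> omega

theorem transpose_sum_lagMatrix (p : ℕ) (W : Finset ℕ) :
    (∑ j ∈ W, lagMatrix p j)ᵀ = ∑ j ∈ W, lagMatrix p j := by
  rw [Matrix.transpose_sum]
  refine Finset.sum_congr rfl fun j _ => ?_
  ext k l
  simp only [lagMatrix, Matrix.transpose_apply, Matrix.of_apply]
  rw [← Int.natAbs_neg, neg_sub]

theorem lagMatrix_nonneg {p j : ℕ} (hj : j < p) (k l : Fin p) : 0 ≤ lagMatrix p j k l := by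
  have : (0 : ℝ) < p - j := by
    rw [sub_pos]
    exact_mod_cast hj
  simp only [lagMatrix, Matrix.of_apply]
  split_ifs <;> positivity

theorem sum_lagMatrix_apply_le {p j : ℕ} (hj : j < p) (k : Fin p) :
    ∑ l, lagMatrix p j k l ≤ 1 / ((p:ℝ) - j) := by
  have hpos : (0 : ℝ) < p - j := by
    rw [sub_pos]
    exact_mod_cast hj
  have hc : ((Finset.univ.filter fun l : Fin p => ((k:ℤ) - (l:ℤ)).natAbs = j).card : ℝ) ≤ 2 := by
    exact_mod_cast card_filter_natAbs_sub_eq_le_two k j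
  simp only [lagMatrix, Matrix.of_apply]
  rw [← Finset.sum_filter, Finset.sum_const, nsmul_eq_mul]
  calc _ ≤ 2 * (1 / (2 * ((p:ℝ) - j))) := by gcongr
    _ = 1 / ((p:ℝ) - j) := by field_simp

theorem sum_sum_ite_natAbs_sub_eq_le {p j : ℕ} (hj1 : 1 ≤ j) (hj : j < p) {a : ℝ} (ha : 0 ≤ a) :
    ∑ k : Fin p, ∑ l : Fin p, (if ((k:ℤ) - (l:ℤ)).natAbs = j then a else 0)
      ≤ 2 * ((p:ℝ) - j) * a := by
  have hc : ((Finset.univ.filter fun x : Fin p × Fin p =>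
      ((x.1:ℤ) - (x.2:ℤ)).natAbs = j).card : ℝ) ≤ 2 * ((p:ℝ) - j) := by
    rw [← Nat.cast_sub hj.le]
    exact_mod_cast card_filter_prod_natAbs_sub_eq_le hj1
  rw [← Fintype.sum_prod_type' (fun k l : Fin p => if ((k:ℤ) - (l:ℤ)).natAbs = j then a else 0),
    ← Finset.sum_filter, Finset.sum_const, nsmul_eq_mul]
  gcongr

theorem sum_sum_lagMatrix_apply_le {p j : ℕ} (hj1 : 1 ≤ j) (hj : j < p) :
    ∑ k, ∑ l, lagMatrix p j k l ≤ 1 := by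
  have hpos : (0 : ℝ) < p - j := by
    rw [sub_pos]
    exact_mod_cast hj
  simp only [lagMatrix, Matrix.of_apply]
  refine (sum_sum_ite_natAbs_sub_eq_le hj1 hj (by positivity)).trans (le_of_eq ?_)
  field_simp

/-- Squared Frobenius norm of a sum of lag matrices; their supports are disjoint. -/
theorem sum_sum_sum_lagMatrix_sq_le {p S : ℕ} (hS : S < p) {W : Finset ℕ}
    (hW : W ⊆ Finset.Icc 1 S) :
    ∑ k, ∑ l, ((∑ j ∈ W, lagMatrix p j) k l) ^ 2 ≤ W.card / (2 * ((p:ℝ) - S)) := by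
  have hpos : (0 : ℝ) < p - S := by
    rw [sub_pos]
    exact_mod_cast hS
  have hsq : ∀ k l : Fin p, ((∑ j ∈ W, lagMatrix p j) k l) ^ 2
      = ∑ j ∈ W, if ((k:ℤ) - (l:ℤ)).natAbs = j then (1 / (2 * ((p:ℝ) - j))) ^ 2 else 0 := by
    intro k l
    rw [Matrix.sum_apply]
    simp only [lagMatrix, Matrix.of_apply]
    rw [Finset.sum_ite_eq, Finset.sum_ite_eq]
    split_ifs <;> simp
  simp_rw [hsq]
  calc ∑ k : Fin p, ∑ l : Fin p, ∑ j ∈ W,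
        (if ((k:ℤ) - (l:ℤ)).natAbs = j then (1 / (2 * ((p:ℝ) - j))) ^ 2 else 0)
      = ∑ j ∈ W, ∑ k : Fin p, ∑ l : Fin p,
        (if ((k:ℤ) - (l:ℤ)).natAbs = j then (1 / (2 * ((p:ℝ) - j))) ^ 2 else 0) := by
        rw [Finset.sum_comm (s := W)]
        exact Finset.sum_congr rfl fun k _ => Finset.sum_comm
    _ ≤ ∑ j ∈ W, 1 / (2 * ((p:ℝ) - S)) := by
        refine Finset.sum_le_sum fun j hj => ?_
        obtain ⟨hj1, hjS⟩ := Finset.mem_Icc.mp (hW hj)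
        have hjS' : (j : ℝ) ≤ S := by exact_mod_cast hjS
        have hposj : (0 : ℝ) < p - j := by linarith
        refine (sum_sum_ite_natAbs_sub_eq_le hj1 (hjS.trans_lt hS) (by positivity)).trans ?_
        calc 2 * ((p:ℝ) - j) * (1 / (2 * ((p:ℝ) - j))) ^ 2 = 1 / (2 * ((p:ℝ) - j)) := by
              field_simp
          _ ≤ _ := by gcongr
    _ = _ := by
        rw [Finset.sum_const, nsmul_eq_mul]
        ring

theorem sum_lagMatrix_nonneg {p S : ℕ} (hS : S < p) {W : Finset ℕ}
    (hW : W ⊆ Finset.Icc 1 S) (k l : Fin p) : 0 ≤ (∑ j ∈ W, lagMatrix p j) k l := by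
  rw [Matrix.sum_apply]
  exact Finset.sum_nonneg fun j hj =>
    lagMatrix_nonneg ((Finset.mem_Icc.mp (hW hj)).2.trans_lt hS) k l

theorem sum_sum_lagMatrix_row_le {p S : ℕ} (hS : S < p) {W : Finset ℕ}
    (hW : W ⊆ Finset.Icc 1 S) (k : Fin p) :
    ∑ l, (∑ j ∈ W, lagMatrix p j) k l ≤ W.card / ((p:ℝ) - S) := by
  have hpos : (0 : ℝ) < p - S := by
    rw [sub_pos]
    exact_mod_cast hS
  simp_rw [Matrix.sum_apply]
  rw [Finset.sum_comm]
  calc ∑ j ∈ W, ∑ l, lagMatrix p j k l ≤ ∑ j ∈ W, 1 / ((p:ℝ) - S) := by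
        refine Finset.sum_le_sum fun j hj => ?_
        have hjS := (Finset.mem_Icc.mp (hW hj)).2
        have hjS' : (j : ℝ) ≤ S := by exact_mod_cast hjS
        refine (sum_lagMatrix_apply_le (hjS.trans_lt hS) k).trans ?_
        gcongr
    _ = _ := by
        rw [Finset.sum_const, nsmul_eq_mul]
        ring

theorem sum_sum_sum_lagMatrix_le {p S : ℕ} (hS : S < p) {W : Finset ℕ}
    (hW : W ⊆ Finset.Icc 1 S) :
    ∑ k, ∑ l, (∑ j ∈ W, lagMatrix p j) k l ≤ W.card := by
  simp_rw [Matrix.sum_apply]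
  calc ∑ k, ∑ l, ∑ j ∈ W, lagMatrix p j k l = ∑ j ∈ W, ∑ k, ∑ l, lagMatrix p j k l := by
        rw [Finset.sum_comm (s := W)]
        exact Finset.sum_congr rfl fun k _ => Finset.sum_comm
    _ ≤ ∑ j ∈ W, 1 := by
        refine Finset.sum_le_sum fun j hj => ?_
        obtain ⟨hj1, hjS⟩ := Finset.mem_Icc.mp (hW hj)
        exact sum_sum_lagMatrix_apply_le hj1 (hjS.trans_lt hS)
    _ = _ := by simp

theorem trace_mul_mul_self_eq {p : ℕ} (A C : Matrix (Fin p) (Fin p) ℝ) :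
    (A * C * (A * C)).trace = ∑ k, ∑ l, A k l * ∑ m, ∑ q, C l m * A m q * C q k := by
  rw [Matrix.mul_assoc]
  simp only [Matrix.trace, Matrix.diag_apply, Matrix.mul_apply, Finset.mul_sum, mul_assoc]

theorem trace_mul_mul_self_le_of_row_sums {p : ℕ} {A C : Matrix (Fin p) (Fin p) ℝ} (hA : Aᵀ = A)
    (hC : Cᵀ = C) (hA0 : ∀ k l, 0 ≤ A k l) {ρ τ c : ℝ} (hρ0 : 0 ≤ ρ) (hc0 : 0 ≤ c)
    (hρ : ∀ k, ∑ l, A k l ≤ ρ)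
    (hτ : ∑ k, ∑ l, A k l ≤ τ) (hc : ∀ k, ∑ l, C k l ^ 2 ≤ c) :
    (A * C * (A * C)).trace ≤ τ * (ρ * c) := by
  have hAs : ∀ k l, A k l = A l k := fun k l => congrFun (congrFun hA l) k
  have hCs : ∀ k l, C k l = C l k := fun k l => congrFun (congrFun hC l) k
  have key : ∀ l, ∑ m, ∑ q, A m q * C l m ^ 2 ≤ ρ * c := fun l => by
    calc ∑ m, ∑ q, A m q * C l m ^ 2 = ∑ m, (∑ q, A m q) * C l m ^ 2 := by
          simp_rw [Finset.sum_mul]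
      _ ≤ ∑ m, ρ * C l m ^ 2 := by
          gcongr with m
          exact hρ m
      _ = ρ * ∑ m, C l m ^ 2 := by rw [Finset.mul_sum]
      _ ≤ ρ * c := by gcongr; exact hc l
  have key' : ∀ k, ∑ m, ∑ q, A m q * C q k ^ 2 ≤ ρ * c := fun k => by
    rw [Finset.sum_comm]
    refine le_trans (le_of_eq ?_) (key k)
    exact Finset.sum_congr rfl fun q _ => Finset.sum_congr rfl fun m _ => by
      rw [hAs m q, hCs q k]
  rw [trace_mul_mul_self_eq]
  calc ∑ k, ∑ l, A k l * ∑ m, ∑ q, C l m * A m q * C q k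
      ≤ ∑ k, ∑ l, A k l * (ρ * c) := by
        refine Finset.sum_le_sum fun k _ => Finset.sum_le_sum fun l _ =>
          mul_le_mul_of_nonneg_left ?_ (hA0 k l)
        calc ∑ m, ∑ q, C l m * A m q * C q k
            ≤ ∑ m, ∑ q, (A m q * C l m ^ 2 / 2 + A m q * C q k ^ 2 / 2) := by
              refine Finset.sum_le_sum fun m _ => Finset.sum_le_sum fun q _ => ?_
              nlinarith [mul_nonneg (hA0 m q) (sq_nonneg (C l m - C q k))]
          _ = (∑ m, ∑ q, A m q * C l m ^ 2) / 2 + (∑ m, ∑ q, A m q * C q k ^ 2) / 2 := by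
              simp_rw [Finset.sum_add_distrib, Finset.sum_div]
          _ ≤ ρ * c := by linarith [key l, key' k]
    _ = (∑ k, ∑ l, A k l) * (ρ * c) := by simp_rw [Finset.sum_mul]
    _ ≤ τ * (ρ * c) := by gcongr

theorem trace_mul_mul_self_le_of_frobenius {p : ℕ} {A C : Matrix (Fin p) (Fin p) ℝ}
    (hC : Cᵀ = C) {r φ : ℝ} (hr : ∀ k, ∑ l, |C k l| ≤ r)
    (hφ : ∑ k, ∑ l, A k l ^ 2 ≤ φ) (hr0 : 0 ≤ r) :
    (A * C * (A * C)).trace ≤ r ^ 2 * φ := by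
  have hCs : ∀ k l, C k l = C l k := fun k l => congrFun (congrFun hC l) k
  have hr' : ∀ l, ∑ k, |C k l| ≤ r := fun l => by
    simp_rw [hCs _ l]
    exact hr l
  have key : ∀ k l, ∑ m, ∑ q, |C l m| * |C q k| ≤ r ^ 2 := fun k l => by
    rw [← Finset.sum_mul_sum, sq]
    exact mul_le_mul (hr l) (hr' k) (Finset.sum_nonneg fun _ _ => abs_nonneg _) hr0
  have hfirst : ∑ k, ∑ l, ∑ m, ∑ q, A k l ^ 2 * (|C l m| * |C q k|) ≤ r ^ 2 * φ := by
    calc ∑ k, ∑ l, ∑ m, ∑ q, A k l ^ 2 * (|C l m| * |C q k|)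
        = ∑ k, ∑ l, A k l ^ 2 * ∑ m, ∑ q, |C l m| * |C q k| := by simp_rw [Finset.mul_sum]
      _ ≤ ∑ k, ∑ l, A k l ^ 2 * r ^ 2 := by
          gcongr with k _ l
          exact key k l
      _ = r ^ 2 * ∑ k, ∑ l, A k l ^ 2 := by
          simp_rw [Finset.mul_sum, mul_comm]
      _ ≤ r ^ 2 * φ := by gcongr
  have hsecond : ∑ k, ∑ l, ∑ m, ∑ q, A m q ^ 2 * (|C l m| * |C q k|) ≤ r ^ 2 * φ := by
    refine le_trans (le_of_eq ?_) hfirst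
    calc ∑ k, ∑ l, ∑ m, ∑ q, A m q ^ 2 * (|C l m| * |C q k|)
        = ∑ x : Fin p × Fin p, ∑ y : Fin p × Fin p,
            A y.1 y.2 ^ 2 * (|C x.2 y.1| * |C y.2 x.1|) := by
          simp_rw [Fintype.sum_prod_type]
      _ = ∑ y : Fin p × Fin p, ∑ x : Fin p × Fin p,
            A y.1 y.2 ^ 2 * (|C x.2 y.1| * |C y.2 x.1|) := Finset.sum_comm
      _ = _ := by
          simp_rw [Fintype.sum_prod_type, mul_comm]
  rw [trace_mul_mul_self_eq]
  calc ∑ k, ∑ l, A k l * ∑ m, ∑ q, C l m * A m q * C q k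
      ≤ ∑ k, ∑ l, ∑ m, ∑ q, (A k l ^ 2 * (|C l m| * |C q k|) / 2
          + A m q ^ 2 * (|C l m| * |C q k|) / 2) := by
        simp_rw [Finset.mul_sum]
        refine Finset.sum_le_sum fun k _ => Finset.sum_le_sum fun l _ =>
          Finset.sum_le_sum fun m _ => Finset.sum_le_sum fun q _ => ?_
        have h1 : A k l * (C l m * A m q * C q k) ≤ |A k l| * |A m q| * (|C l m| * |C q k|) := by
          refine (le_abs_self _).trans (le_of_eq ?_)
          simp only [abs_mul]
          ring
        have h2 : |A k l| * |A m q| ≤ (A k l ^ 2 + A m q ^ 2) / 2 := by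
          nlinarith [sq_nonneg (|A k l| - |A m q|), sq_abs (A k l), sq_abs (A m q)]
        have h3 := mul_le_mul_of_nonneg_right h2 (by positivity : 0 ≤ |C l m| * |C q k|)
        linarith
    _ = (∑ k, ∑ l, ∑ m, ∑ q, A k l ^ 2 * (|C l m| * |C q k|)) / 2
          + (∑ k, ∑ l, ∑ m, ∑ q, A m q ^ 2 * (|C l m| * |C q k|)) / 2 := by
        simp_rw [Finset.sum_add_distrib, Finset.sum_div]
    _ ≤ r ^ 2 * φ := by linarith

theorem sum_abs_mul_apply_le {p : ℕ} {A C : Matrix (Fin p) (Fin p) ℝ} (hA0 : ∀ k l, 0 ≤ A k l)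
    {ρ r : ℝ} (hρ : ∀ k, ∑ l, A k l ≤ ρ) (hr : ∀ k, ∑ l, |C k l| ≤ r) (hr0 : 0 ≤ r)
    (k : Fin p) : ∑ l, |(A * C) k l| ≤ ρ * r := by
  calc ∑ l, |(A * C) k l| ≤ ∑ l, ∑ m, A k m * |C m l| := by
        refine Finset.sum_le_sum fun l _ => ?_
        rw [Matrix.mul_apply]
        refine (Finset.abs_sum_le_sum_abs _ _).trans (le_of_eq ?_)
        exact Finset.sum_congr rfl fun m _ => by rw [abs_mul, abs_of_nonneg (hA0 k m)]
    _ = ∑ m, A k m * ∑ l, |C m l| := by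
        rw [Finset.sum_comm]
        simp_rw [Finset.mul_sum]
    _ ≤ ∑ m, A k m * r := Finset.sum_le_sum fun m _ => mul_le_mul_of_nonneg_left (hr m) (hA0 k m)
    _ = (∑ m, A k m) * r := by rw [Finset.sum_mul]
    _ ≤ ρ * r := by gcongr; exact hρ k

theorem abs_apply_le_of_posDef_of_diag {p : ℕ} {C : Matrix (Fin p) (Fin p) ℝ} (hC : C.PosDef)
    {a : ℝ} (hdiag : ∀ i, C i i = a) (i j : Fin p) : |C i j| ≤ a := by
  have hsym : C j i = C i j := by simpa using hC.isHermitian.apply i j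
  have hquad : ∀ c : ℝ, 0 ≤ a + 2 * c * C i j + c ^ 2 * a := fun c => by
    have := hC.posSemidef.dotProduct_mulVec_nonneg (Pi.single i 1 + Pi.single j c)
    simp [Matrix.mulVec_add, hdiag, hsym] at this
    linarith
  exact abs_le.mpr ⟨by linarith [hquad 1], by linarith [hquad (-1)]⟩

theorem memF.abs_apply_le {p s S : ℕ} {σ σ0 : ℝ} {C : Matrix (Fin p) (Fin p) ℝ}
    (h : memF p s S σ σ0 C) (i j : Fin p) : |C i j| ≤ σ0 := by
  obtain ⟨hC, v, hv0, hv, -⟩ := h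
  exact abs_apply_le_of_posDef_of_diag hC (fun i => by simp [hv, hv0]) i j

theorem memF.card_filter_apply_ne_zero_le {p s S : ℕ} {σ σ0 : ℝ} {C : Matrix (Fin p) (Fin p) ℝ}
    (h : memF p s S σ σ0 C) (k : Fin p) :
    (Finset.univ.filter fun l => C k l ≠ 0).card ≤ 2 * s + 1 := by
  obtain ⟨-, v, -, hv, T, -, hTs, -, hT0⟩ := h
  have hsub : (Finset.univ.filter fun l => C k l ≠ 0) ⊆
      (Finset.univ.filter fun l : Fin p => ((k:ℤ) - (l:ℤ)).natAbs = 0) ∪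
        T.biUnion fun j => Finset.univ.filter fun l : Fin p => ((k:ℤ) - (l:ℤ)).natAbs = j := by
    intro l hl
    simp only [Finset.mem_filter, Finset.mem_univ, true_and, hv] at hl
    simp only [Finset.mem_union, Finset.mem_filter, Finset.mem_univ, true_and, Finset.mem_biUnion,
      exists_eq_right']
    by_contra hcon
    rw [not_or] at hcon
    exact hl (hT0 _ (by omega) (by omega) hcon.2)
  calc _ ≤ _ := Finset.card_le_card hsub
    _ ≤ _ := Finset.card_union_le _ _
    _ ≤ 1 + T.card * 2 := by
        gcongr
        · exact card_filter_natAbs_sub_eq_zero_le_one k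
        · exact Finset.card_biUnion_le_card_mul _ _ _ fun j _ =>
            card_filter_natAbs_sub_eq_le_two k j
    _ = 2 * s + 1 := by rw [hTs]; ring

theorem sum_le_of_card_support_le {p N : ℕ} {f : Fin p → ℝ} {P : Fin p → Prop} [DecidablePred P]
    (hcard : (Finset.univ.filter P).card ≤ N) (hf : ∀ l, ¬ P l → f l = 0) {a : ℝ}
    (ha0 : 0 ≤ a) (ha : ∀ l, f l ≤ a) : ∑ l, f l ≤ N * a := by
  have hN : ((Finset.univ.filter P).card : ℝ) ≤ N := by exact_mod_cast hcard
  calc ∑ l, f l = ∑ l ∈ Finset.univ.filter P, f l := by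
        rw [Finset.sum_filter]
        refine Finset.sum_congr rfl fun l _ => ?_
        split_ifs with h
        · rfl
        · exact hf l h
    _ ≤ (Finset.univ.filter P).card • a := Finset.sum_le_card_nsmul _ _ _ fun l _ => ha l
    _ ≤ N * a := by rw [nsmul_eq_mul]; gcongr

theorem memF.sum_abs_row_le {p s S : ℕ} {σ σ0 : ℝ} {C : Matrix (Fin p) (Fin p) ℝ}
    (h : memF p s S σ σ0 C) (hσ0 : 0 ≤ σ0) (k : Fin p) : ∑ l, |C k l| ≤ (2 * s + 1) * σ0 := by
  have := sum_le_of_card_support_le (f := fun l => |C k l|) (h.card_filter_apply_ne_zero_le k)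
    (fun l hl => by simpa using hl) hσ0 (fun l => h.abs_apply_le k l)
  exact_mod_cast this

theorem memF.sum_sq_row_le {p s S : ℕ} {σ σ0 : ℝ} {C : Matrix (Fin p) (Fin p) ℝ}
    (h : memF p s S σ σ0 C) (k : Fin p) :
    ∑ l, C k l ^ 2 ≤ (2 * s + 1) * σ0 ^ 2 := by
  have := sum_le_of_card_support_le (f := fun l => C k l ^ 2) (h.card_filter_apply_ne_zero_le k)
    (fun l hl => by simpa using hl) (sq_nonneg σ0) (fun l => by
      rw [← sq_abs]
      exact pow_le_pow_left₀ (abs_nonneg _) (h.abs_apply_le k l) 2)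
  exact_mod_cast this

/-- Deviation bound for `Tr(A_W(Σ_n − Σ))` under `Σ ∈ F(s,S,σ)`. -/
theorem deviation_alt_lagMatrix_sum {p n s S : ℕ} (hn : 0 < n) (hs : 1 ≤ s)
    (hsS : s ≤ S) (hS : (S : ℝ) < (p:ℝ)/2)
    (σ σ0 : ℝ) (hσ : 0 < σ) (hσ0 : 0 < σ0)
    (Cov : Matrix (Fin p) (Fin p) ℝ) (hCov : memF p s S σ σ0 Cov)
    (W : Finset ℕ) (hW : W ⊆ Finset.Icc 1 S) (hw : 1 ≤ W.card)
    (K u : ℝ) (hK : K ∈ Set.Ioo (0:ℝ) 1) (hu : 0 < u) :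
    (W.card = 1 →
      (iidGaussian n p Cov) {X |
          Matrix.trace ((∑ j ∈ W, lagMatrix p j) * (sampleCov X - Cov)) ≥
        σ0 * max (Real.sqrt (u / (1 - K)) * Real.sqrt ((2 * s + 1) / (n * ((p:ℝ) - S))))
          ((u / K) * (2 * s + 1) / (n * ((p:ℝ) - S)))}
        ≤ ENNReal.ofReal (Real.exp (-u/4))) ∧
    (1 < W.card →
      (iidGaussian n p Cov) {X |
          Matrix.trace ((∑ j ∈ W, lagMatrix p j) * (sampleCov X - Cov)) ≥
        σ0 * ((2 * s + 1) *
          max (Real.sqrt (u / (2 * (1 - K))) * Real.sqrt ((W.card : ℝ) / (n * ((p:ℝ) - S))))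
            ((u / K) * (W.card : ℝ) / (n * ((p:ℝ) - S))))}
        ≤ ENNReal.ofReal (Real.exp (-u/4))) := by
  have hSp : S < p := by
    have : (S : ℝ) < p := by linarith [(Nat.cast_nonneg S : (0:ℝ) ≤ S)]
    exact_mod_cast this
  have hpS : (0 : ℝ) < p - S := by
    rw [sub_pos]
    exact_mod_cast hSp
  have hn' : (0 : ℝ) < n := by exact_mod_cast hn
  have hw' : (0 : ℝ) < W.card := by exact_mod_cast hw
  have h1K : 0 < 1 - K := by linarith [hK.2]
  have hPD := hCov.1
  have hsym : Covᵀ = Cov := by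
    simpa [Matrix.conjTranspose_eq_transpose_of_trivial] using hPD.isHermitian.eq
  have hA := transpose_sum_lagMatrix p W
  have hA0 := sum_lagMatrix_nonneg hSp hW
  have hρ := sum_sum_lagMatrix_row_le hSp hW
  have hr := hCov.sum_abs_row_le hσ0.le
  have hL := sum_abs_mul_apply_le hA0 hρ hr (by positivity)
  have hquot : ∀ x : ℝ, √(σ0 ^ 2 * x) = σ0 * √x := fun x => by
    rw [Real.sqrt_mul (sq_nonneg _), Real.sqrt_sq hσ0.le]
  constructor
  · intro hw1
    rw [hw1] at hL hρ
    have hτ := sum_sum_sum_lagMatrix_le hSp hW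
    rw [hw1] at hτ
    have hV := trace_mul_mul_self_le_of_row_sums hA hsym hA0 (by positivity) (by positivity) hρ hτ
      hCov.sum_sq_row_le
    refine iidGaussian_trace_ge_le_exp_neg hn hPD hA hL hV (by positivity) (by positivity) hK hu
      ?_ ?_
    · refine le_trans (le_of_eq ?_) (mul_le_mul_of_nonneg_left (le_max_left _ _) hσ0.le)
      rw [mul_left_comm σ0, ← hquot]
      congr 2
      push_cast
      field_simp
    · refine le_trans (le_of_eq ?_) (mul_le_mul_of_nonneg_left (le_max_right _ _) hσ0.le)
      push_cast
      field_simp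
  · intro _
    have hV := trace_mul_mul_self_le_of_frobenius hsym hr (sum_sum_sum_lagMatrix_sq_le hSp hW)
      (by positivity)
    have hs0 : (0 : ℝ) < 2 * s + 1 := by positivity
    refine iidGaussian_trace_ge_le_exp_neg hn hPD hA hL hV (by positivity) (by positivity) hK hu
      ?_ ?_
    · refine le_trans (le_of_eq ?_) (mul_le_mul_of_nonneg_left
        (mul_le_mul_of_nonneg_left (le_max_left _ _) hs0.le) hσ0.le)
      rw [← Real.sqrt_mul (by positivity), ← Real.sqrt_mul (by positivity), ← mul_assoc,
        mul_comm σ0, ← Real.sqrt_sq (by positivity : 0 ≤ (2 * (s:ℝ) + 1) * σ0),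
        ← Real.sqrt_mul (by positivity), Real.sqrt_sq (by positivity)]
      congr 1
      field_simp
    · refine le_trans (le_of_eq ?_) (mul_le_mul_of_nonneg_left
        (mul_le_mul_of_nonneg_left (le_max_right _ _) hs0.le) hσ0.le)
      field_simp
end

section
/- Let 1 ≤ s ≤ S < p/2, let u > 0, and set t = max{ √(uS/(n(p−S))), 2uS/(n(p−S)) }. Consider the test Δ that rejects if and only if Tr(A_{1:S}(Σ_n − I_p)) ≥ t. If σ ≥ (2(s+1)/s)·t, then P_{I_p}[Δ rejects] + sup_{Σ ∈ F_+(s,S,σ)} P_Σ[Δ accepts] ≤ 2·exp(−u/4), where P_{I_p} (resp. P_Σ) denotes the law of Σ_n when X_1,…,X_n are i.i.d. N_p(0, I_p) (resp. N_p(0, Σ)). -/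
open MeasureTheory Matrix Real
open scoped ENNReal BigOperators NNReal

theorem lintegral_fin_prod_eq_prod {n : ℕ} {E : Type*} [MeasureSpace E]
    [SigmaFinite (volume : Measure E)] {f : Fin n → E → ℝ≥0∞} (hf : ∀ i, Measurable (f i)) :
    ∫⁻ x : Fin n → E, ∏ i, f i (x i) = ∏ i, ∫⁻ x, f i x := by
  induction n with
  | zero => simp [lintegral_const, volume_pi]
  | succ n ih =>
    have e := (volume_preserving_piFinSuccAbove (fun _ : Fin (n + 1) => E) 0).symm
    rw [← e.lintegral_comp (by fun_prop)]
    simp only [MeasurableEquiv.piFinSuccAbove_symm_apply, Fin.insertNthEquiv, Equiv.coe_fn_mk,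
      Fin.insertNth_zero, Fin.prod_univ_succ, Fin.cons_zero, Fin.cons_succ, cast_eq]
    rw [← ih fun i => hf i.succ]
    exact lintegral_prod_mul (μ := volume) (ν := volume) (hf 0).aemeasurable
      (g := fun y : Fin n → E => ∏ i, f i.succ (y i))
      (Finset.measurable_fun_prod _ fun i _ => (hf i.succ).comp (measurable_pi_apply i)).aemeasurable

theorem lintegral_exp_neg_half_sq :
    ∫⁻ x : ℝ, ENNReal.ofReal (Real.exp (-(1 / 2) * x ^ 2)) = ENNReal.ofReal √(2 * π) := by
  rw [← ofReal_integral_eq_lintegral_ofReal (integrable_exp_neg_mul_sq (by norm_num))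
    (Filter.Eventually.of_forall fun _ => (Real.exp_pos _).le), integral_gaussian]
  congr 2
  ring

theorem exists_symm_sqrt {p : ℕ} {C : Matrix (Fin p) (Fin p) ℝ} (hC : C.PosDef) :
    ∃ R : Matrix (Fin p) (Fin p) ℝ, Rᵀ = R ∧ R * R = C := by
  open scoped MatrixOrder ComplexOrder in
  refine ⟨CFC.sqrt C, ?_, CFC.sqrt_mul_sqrt_self C hC.posSemidef.nonneg⟩
  open scoped MatrixOrder ComplexOrder in
  simpa [Matrix.IsHermitian] using (CFC.sqrt_nonneg C).posSemidef.isHermitian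

theorem lintegral_exp_neg_half_quadratic {p : ℕ} {N : Matrix (Fin p) (Fin p) ℝ} (hN : N.PosDef) :
    ∫⁻ x : Fin p → ℝ, ENNReal.ofReal (Real.exp (-(1 / 2) * (x ⬝ᵥ N *ᵥ x)))
      = ENNReal.ofReal ((2 * π) ^ ((p : ℝ) / 2) * N.det ^ (-(1 : ℝ) / 2)) := by
  obtain ⟨R, hRt, hR⟩ := exists_symm_sqrt hN
  have hdet : R.det * R.det = N.det := by rw [← det_mul, hR]
  have hR0 : R.det ≠ 0 := fun h => hN.det_pos.ne' (by rw [← hdet, h, zero_mul])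
  have hquad (x : Fin p → ℝ) : Real.exp (-(1 / 2) * (x ⬝ᵥ N *ᵥ x))
      = ∏ i, Real.exp (-(1 / 2) * (R *ᵥ x) i ^ 2) := by
    rw [← Real.exp_sum, ← Finset.mul_sum, ← hR, ← mulVec_mulVec, dotProduct_mulVec,
      ← mulVec_transpose, hRt]
    simp [dotProduct, sq]
  have hmap := Real.map_matrix_volume_pi_eq_smul_volume_pi hR0
  have hmeas : Measurable (toLin' R) := (toLin' R).continuous_of_finiteDimensional.measurable
  calc ∫⁻ x : Fin p → ℝ, ENNReal.ofReal (Real.exp (-(1 / 2) * (x ⬝ᵥ N *ᵥ x)))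
      = ∫⁻ x : Fin p → ℝ, ∏ i, ENNReal.ofReal (Real.exp (-(1 / 2) * (toLin' R x) i ^ 2)) := by
        refine lintegral_congr fun x => ?_
        rw [hquad, ENNReal.ofReal_prod_of_nonneg fun _ _ => (Real.exp_pos _).le]
        rfl
    _ = ENNReal.ofReal |R.det⁻¹| *
        ∫⁻ y : Fin p → ℝ, ∏ i, ENNReal.ofReal (Real.exp (-(1 / 2) * y i ^ 2)) := by
        rw [← lintegral_map (f := fun y : Fin p → ℝ =>
          ∏ i, ENNReal.ofReal (Real.exp (-(1 / 2) * y i ^ 2))) (by fun_prop) hmeas, hmap,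
          lintegral_smul_measure, smul_eq_mul]
    _ = _ := by
        rw [lintegral_fin_prod_eq_prod (f := fun _ y => ENNReal.ofReal (Real.exp (-(1 / 2) * y ^ 2)))
          (fun _ => by fun_prop), lintegral_exp_neg_half_sq, Finset.prod_const, Finset.card_fin,
          ← ENNReal.ofReal_pow (Real.sqrt_nonneg _), ← ENNReal.ofReal_mul (abs_nonneg _), mul_comm]
        congr 2
        · rw [Real.sqrt_eq_rpow, ← Real.rpow_natCast, ← Real.rpow_mul (by positivity)]
          congr 1
          ring
        · rw [neg_div, Real.rpow_neg hN.det_pos.le, ← Real.sqrt_eq_rpow, ← hdet,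
            Real.sqrt_mul_self_eq_abs, abs_inv]

theorem exp_le_one_sub {y : ℝ} (hy : |y| ≤ 1 / 3) :
    Real.exp (-y - 3 / 4 * y ^ 2) ≤ 1 - y := by
  have hlt : |y| < 1 := by linarith
  have hpos : 0 < 1 - y := by linarith [le_abs_self y]
  rw [← Real.le_log_iff_exp_le hpos]
  have h := (abs_le.1 (Real.abs_log_sub_add_sum_range_le hlt 4)).1
  have hy2 : |y| ^ 2 = y ^ 2 := sq_abs y
  have ha := abs_nonneg y
  have h5 : |y| ^ (4 + 1) / (1 - |y|) ≤ y ^ 2 / 18 := by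
    rw [div_le_iff₀ (by linarith), ← hy2]
    have : |y| ^ 3 ≤ (1 / 3) ^ 3 := by gcongr
    nlinarith [mul_nonneg (sq_nonneg |y|) (sub_nonneg.2 this), sq_nonneg |y|,
      mul_nonneg (sq_nonneg |y|) (sub_nonneg.2 hy)]
  have h3 : y ^ 3 ≤ y ^ 2 / 3 := by nlinarith [sq_nonneg y, le_abs_self y]
  have h4 : y ^ 4 ≤ y ^ 2 / 9 := by
    have : y ^ 2 ≤ 1 / 9 := by rw [← hy2]; nlinarith
    nlinarith [sq_nonneg y]
  simp [Finset.sum_range_succ] at h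
  norm_num at h h5
  linarith [sq_nonneg y]

theorem trace_mul_self_eq_sum_eigenvalues_sq {p : ℕ} {Y : Matrix (Fin p) (Fin p) ℝ}
    (hY : Y.IsHermitian) : (Y * Y).trace = ∑ i, hY.eigenvalues i ^ 2 := by
  conv_lhs => rw [hY.spectral_theorem, ← map_mul, Unitary.conjStarAlgAut_apply, trace_mul_cycle]
  simp [diagonal_mul_diagonal, trace_diagonal, sq]

theorem det_one_sub_eq_prod_eigenvalues {p : ℕ} {Y : Matrix (Fin p) (Fin p) ℝ}
    (hY : Y.IsHermitian) : (1 - Y).det = ∏ i, (1 - hY.eigenvalues i) := by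
  have h := congrArg (Polynomial.eval 1) hY.charpoly_eq
  rw [eval_charpoly, Polynomial.eval_prod] at h
  simpa using h

theorem exp_le_det_one_sub {p : ℕ} {Y : Matrix (Fin p) (Fin p) ℝ} (hY : Y.IsHermitian)
    (hb : ∀ x, |x ⬝ᵥ Y *ᵥ x| ≤ 1 / 3 * (x ⬝ᵥ x)) :
    Real.exp (-Y.trace - 3 / 4 * (Y * Y).trace) ≤ (1 - Y).det := by
  rw [det_one_sub_eq_prod_eigenvalues hY, trace_mul_self_eq_sum_eigenvalues_sq hY,
    hY.trace_eq_sum_eigenvalues, Finset.mul_sum, ← Finset.sum_neg_distrib,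
    ← Finset.sum_sub_distrib, Real.exp_sum]
  refine Finset.prod_le_prod (fun _ _ => (Real.exp_pos _).le) fun i _ => exp_le_one_sub ?_
  have hnorm : (hY.eigenvectorBasis i).ofLp ⬝ᵥ (hY.eigenvectorBasis i).ofLp = 1 := by
    have h := hY.eigenvectorBasis.orthonormal.1 i
    rw [EuclideanSpace.norm_eq, Real.sqrt_eq_one] at h
    simpa [dotProduct, sq] using h
  have h := hb (hY.eigenvectorBasis i).ofLp
  rw [hY.mulVec_eigenvectorBasis, dotProduct_smul, hnorm] at h
  simpa using h

theorem abs_dotProduct_mulVec_le {p : ℕ} {M : Matrix (Fin p) (Fin p) ℝ} {b : ℝ}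
    (hsymm : M.IsSymm) (hM : ∀ i, ∑ j, |M i j| ≤ b) (x : Fin p → ℝ) :
    |x ⬝ᵥ M *ᵥ x| ≤ b * (x ⬝ᵥ x) := by
  have hrow : ∑ i, ∑ j, |M i j| * x i ^ 2 ≤ b * (x ⬝ᵥ x) := by
    rw [dotProduct, Finset.mul_sum]
    refine Finset.sum_le_sum fun i _ => ?_
    rw [← Finset.sum_mul, sq]
    exact mul_le_mul_of_nonneg_right (hM i) (mul_self_nonneg _)
  have hcol : ∑ i, ∑ j, |M i j| * x j ^ 2 = ∑ i, ∑ j, |M i j| * x i ^ 2 := by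
    rw [Finset.sum_comm]
    simp_rw [hsymm.apply]
  calc |x ⬝ᵥ M *ᵥ x| = |∑ i, ∑ j, x i * (M i j * x j)| := by
        simp only [dotProduct, mulVec, Finset.mul_sum]
    _ ≤ ∑ i, ∑ j, |x i * (M i j * x j)| :=
        (Finset.abs_sum_le_sum_abs _ _).trans
          (Finset.sum_le_sum fun _ _ => Finset.abs_sum_le_sum_abs _ _)
    _ ≤ ∑ i, ∑ j, (1 / 2 * (|M i j| * x i ^ 2) + 1 / 2 * (|M i j| * x j ^ 2)) := by
        refine Finset.sum_le_sum fun i _ => Finset.sum_le_sum fun j _ => ?_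
        rw [abs_mul, abs_mul, ← sq_abs (x i), ← sq_abs (x j)]
        nlinarith [mul_nonneg (abs_nonneg (M i j)) (sq_nonneg (|x i| - |x j|))]
    _ = ∑ i, ∑ j, |M i j| * x i ^ 2 := by
        simp only [Finset.sum_add_distrib, ← Finset.mul_sum, hcol]
        ring
    _ ≤ b * (x ⬝ᵥ x) := hrow

theorem sum_mulVec_sq_le {p : ℕ} {M : Matrix (Fin p) (Fin p) ℝ} {b : ℝ} (hb : 0 ≤ b)
    (hsymm : M.IsSymm) (hM : ∀ i, ∑ j, |M i j| ≤ b) (x : Fin p → ℝ) :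
    ∑ i, (M *ᵥ x) i ^ 2 ≤ b ^ 2 * ∑ i, x i ^ 2 := by
  have hcs (i : Fin p) : (M *ᵥ x) i ^ 2 ≤ b * ∑ j, |M i j| * x j ^ 2 := by
    calc (M *ᵥ x) i ^ 2 ≤ (∑ j, |M i j|) * ∑ j, |M i j| * x j ^ 2 := by
          refine Finset.sum_sq_le_sum_mul_sum_of_sq_le_mul (r := fun j => M i j * x j)
            (f := fun j => |M i j|) (g := fun j => |M i j| * x j ^ 2) Finset.univ
            (fun _ _ => abs_nonneg _)
            (fun _ _ => by positivity) fun j _ => ?_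
          rw [mul_pow, ← mul_assoc, abs_mul_abs_self, sq (M i j)]
      _ ≤ _ := mul_le_mul_of_nonneg_right (hM i) (Finset.sum_nonneg fun _ _ => by positivity)
  calc ∑ i, (M *ᵥ x) i ^ 2 ≤ ∑ i, b * ∑ j, |M i j| * x j ^ 2 := Finset.sum_le_sum fun i _ => hcs i
    _ = b * ∑ j, (∑ i, |M j i|) * x j ^ 2 := by
        rw [← Finset.mul_sum, Finset.sum_comm]
        simp_rw [Finset.sum_mul, hsymm.apply]
    _ ≤ b * ∑ j, b * x j ^ 2 := by
        gcongr with j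
        exact hM j
    _ = b ^ 2 * ∑ i, x i ^ 2 := by rw [← Finset.mul_sum]; ring

theorem trace_mul_self_le {p : ℕ} (N : Matrix (Fin p) (Fin p) ℝ) :
    (N * N).trace ≤ ∑ j, ∑ i, N i j ^ 2 := by
  have hswap : ∑ j, ∑ i, N j i ^ 2 = ∑ j, ∑ i, N i j ^ 2 := Finset.sum_comm
  calc (N * N).trace = ∑ j, ∑ i, N j i * N i j := by simp [trace, mul_apply]
    _ ≤ ∑ j, ∑ i, (1 / 2 * N j i ^ 2 + 1 / 2 * N i j ^ 2) :=
        Finset.sum_le_sum fun j _ => Finset.sum_le_sum fun i _ => by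
          nlinarith [sq_nonneg (N j i - N i j)]
    _ = _ := by
        simp only [Finset.sum_add_distrib, ← Finset.mul_sum, hswap]
        ring

theorem trace_mul_mul_self_le {p : ℕ} {M C : Matrix (Fin p) (Fin p) ℝ} {K : ℝ} (hK : 0 ≤ K)
    (hC : C.IsSymm) (hrow : ∀ i, ∑ j, |C i j| ≤ K) :
    ((M * C) * (M * C)).trace ≤ K ^ 2 * ∑ i, ∑ j, M i j ^ 2 := by
  have hcyc : ((M * C) * (M * C)).trace = ((C * M) * (C * M)).trace := by
    rw [mul_assoc, trace_mul_comm]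
    simp only [mul_assoc]
  rw [hcyc]
  refine (trace_mul_self_le _).trans ?_
  rw [Finset.sum_comm (f := fun i j => M i j ^ 2), Finset.mul_sum]
  exact Finset.sum_le_sum fun j _ => sum_mulVec_sq_le hK hC hrow fun i => M i j

theorem measurable_ofReal_exp_quadratic {p : ℕ} (G : Matrix (Fin p) (Fin p) ℝ) :
    Measurable fun x : Fin p → ℝ => ENNReal.ofReal (Real.exp (1 / 2 * (x ⬝ᵥ G *ᵥ x))) := by
  have : Measurable fun x : Fin p → ℝ => x ⬝ᵥ G *ᵥ x := by
    simp only [dotProduct, mulVec]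
    fun_prop
  fun_prop

/-- The Laplace transform of a Gaussian quadratic form, in the range where it is controlled by its
first two cumulants. -/
theorem lintegral_gaussianPDF_mul_exp_quadratic_le {p : ℕ} {C G : Matrix (Fin p) (Fin p) ℝ}
    {g K : ℝ} (hC : C.PosDef) (hG : G.IsSymm) (hg0 : 0 ≤ g)
    (hg : ∀ x, |x ⬝ᵥ G *ᵥ x| ≤ g * (x ⬝ᵥ x)) (hK : ∀ x, x ⬝ᵥ C *ᵥ x ≤ K * (x ⬝ᵥ x))
    (hgK : g * K ≤ 1 / 3) :
    ∫⁻ x, gaussianPDF C x * ENNReal.ofReal (Real.exp (1 / 2 * (x ⬝ᵥ G *ᵥ x)))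
      ≤ ENNReal.ofReal
        (Real.exp (1 / 2 * (G * C).trace + 3 / 8 * ((G * C) * (G * C)).trace)) := by
  obtain ⟨R, hRt, hR⟩ := exists_symm_sqrt hC
  have hdet : R.det * R.det = C.det := by rw [← det_mul, hR]
  have hRu : IsUnit R := by
    rw [Matrix.isUnit_iff_isUnit_det, isUnit_iff_ne_zero]
    exact fun h => hC.det_pos.ne' (by rw [← hdet, h, zero_mul])
  have hself (x : Fin p → ℝ) : 0 ≤ x ⬝ᵥ x := Finset.sum_nonneg fun _ _ => mul_self_nonneg _
  set Y := R * G * R with hYdef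
  have hYsymm : Yᵀ = Y := by simp [hYdef, transpose_mul, hRt, hG.eq, mul_assoc]
  have hYh : Y.IsHermitian := by rw [IsHermitian, conjTranspose_eq_transpose_of_trivial, hYsymm]
  have hmove (x y : Fin p → ℝ) : x ⬝ᵥ R *ᵥ y = (R *ᵥ x) ⬝ᵥ y := by
    rw [dotProduct_mulVec, ← mulVec_transpose, hRt]
  have hYb (x : Fin p → ℝ) : |x ⬝ᵥ Y *ᵥ x| ≤ 1 / 3 * (x ⬝ᵥ x) := by
    have h1 : x ⬝ᵥ Y *ᵥ x = (R *ᵥ x) ⬝ᵥ G *ᵥ (R *ᵥ x) := by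
      rw [hYdef, ← mulVec_mulVec, ← mulVec_mulVec, hmove]
    have h2 : (R *ᵥ x) ⬝ᵥ (R *ᵥ x) = x ⬝ᵥ C *ᵥ x := by rw [← hR, ← mulVec_mulVec, hmove x]
    rw [h1]
    calc _ ≤ g * ((R *ᵥ x) ⬝ᵥ (R *ᵥ x)) := hg _
      _ ≤ g * (K * (x ⬝ᵥ x)) := by rw [h2]; exact mul_le_mul_of_nonneg_left (hK x) hg0
      _ ≤ _ := by rw [← mul_assoc]; exact mul_le_mul_of_nonneg_right hgK (hself x)
  have hYpd : (1 - Y).PosDef := by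
    refine PosDef.of_dotProduct_mulVec_pos (isHermitian_one.sub hYh) fun x hx => ?_
    have hx0 : 0 < x ⬝ᵥ x := (hself x).lt_of_ne fun h => hx (dotProduct_self_eq_zero.1 h.symm)
    rw [star_trivial, sub_mulVec, one_mulVec, dotProduct_sub]
    linarith [(abs_le.1 (hYb x)).2]
  have hconj : R * (C⁻¹ - G) * R = 1 - Y := by
    have h : R * C⁻¹ * R = 1 := by
      rw [← hR, Matrix.mul_inv_rev, ← mul_assoc, mul_nonsing_inv _ ((isUnit_iff_isUnit_det R).1 hRu),
        one_mul, nonsing_inv_mul _ ((isUnit_iff_isUnit_det R).1 hRu)]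
    rw [mul_sub, sub_mul, h]
  have hNpd : (C⁻¹ - G).PosDef := by
    rw [← IsUnit.posDef_star_left_conjugate_iff hRu, star_eq_conjTranspose,
      conjTranspose_eq_transpose_of_trivial, hRt, hconj]
    exact hYpd
  have hNdet : C.det * (C⁻¹ - G).det = (1 - Y).det := by
    rw [← hconj, det_mul, det_mul, ← hdet]
    ring
  have htr : Y.trace = (G * C).trace := by
    rw [hYdef, mul_assoc, trace_mul_comm, mul_assoc, hR]
  have htr2 : (Y * Y).trace = ((G * C) * (G * C)).trace := by
    have : Y * Y = R * (G * C * G * R) := by rw [hYdef, ← hR]; simp only [mul_assoc]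
    rw [this, trace_mul_comm, mul_assoc (G * C * G), hR, mul_assoc (G * C)]
  have hexp := exp_le_det_one_sub hYh hYb
  rw [htr, htr2] at hexp
  have hpi : (0 : ℝ) < 2 * π := by positivity
  calc ∫⁻ x, gaussianPDF C x * ENNReal.ofReal (Real.exp (1 / 2 * (x ⬝ᵥ G *ᵥ x)))
      = ∫⁻ x, ENNReal.ofReal ((2 * π) ^ (-(p : ℝ) / 2) * C.det ^ (-(1 : ℝ) / 2)) *
          ENNReal.ofReal (Real.exp (-(1 / 2) * (x ⬝ᵥ (C⁻¹ - G) *ᵥ x))) := by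
        refine lintegral_congr fun x => ?_
        have hc : 0 ≤ (2 * π) ^ (-(p : ℝ) / 2) * C.det ^ (-(1 : ℝ) / 2) :=
          mul_nonneg (by positivity) (Real.rpow_nonneg hC.det_pos.le _)
        rw [gaussianPDF, ENNReal.ofReal_mul hc, mul_assoc, ← ENNReal.ofReal_mul (Real.exp_pos _).le,
          ← Real.exp_add, sub_mulVec, dotProduct_sub]
        congr 3
        ring
    _ = ENNReal.ofReal ((1 - Y).det ^ (-(1 : ℝ) / 2)) := by
        rw [lintegral_const_mul' _ _ ENNReal.ofReal_ne_top, lintegral_exp_neg_half_quadratic hNpd,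
          ← ENNReal.ofReal_mul (mul_nonneg (by positivity) (Real.rpow_nonneg hC.det_pos.le _)),
          ← hNdet, Real.mul_rpow hC.det_pos.le hNpd.det_pos.le]
        have h1 : (2 * π) ^ (-(p : ℝ) / 2) * (2 * π) ^ ((p : ℝ) / 2) = 1 := by
          rw [← Real.rpow_add hpi, ← add_div, neg_add_cancel, zero_div, Real.rpow_zero]
        congr 1
        linear_combination (C.det ^ (-(1 : ℝ) / 2) * (C⁻¹ - G).det ^ (-(1 : ℝ) / 2)) * h1
    _ ≤ _ := by
        refine ENNReal.ofReal_le_ofReal ?_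
        refine (Real.rpow_le_rpow_of_nonpos (Real.exp_pos _) hexp (by norm_num)).trans_eq ?_
        rw [← Real.exp_mul]
        congr 1
        ring

/-- Chernoff bound for the sum of a quadratic form over an i.i.d. Gaussian sample. -/
theorem iidGaussian_quadratic_chernoff {n p : ℕ} {C G : Matrix (Fin p) (Fin p) ℝ}
    {g K : ℝ} (hC : C.PosDef) (hG : G.IsSymm) (hg0 : 0 ≤ g)
    (hg : ∀ x, |x ⬝ᵥ G *ᵥ x| ≤ g * (x ⬝ᵥ x)) (hK : ∀ x, x ⬝ᵥ C *ᵥ x ≤ K * (x ⬝ᵥ x))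
    (hgK : g * K ≤ 1 / 3) (θ : ℝ) :
    iidGaussian n p C {X | θ ≤ ∑ k, X k ⬝ᵥ G *ᵥ X k}
      ≤ ENNReal.ofReal (Real.exp (-(1 / 2) * θ +
        n * (1 / 2 * (G * C).trace + 3 / 8 * ((G * C) * (G * C)).trace))) := by
  have hmeas : MeasurableSet {X : Fin n → Fin p → ℝ | θ ≤ ∑ k, X k ⬝ᵥ G *ᵥ X k} := by
    refine measurableSet_le measurable_const ?_
    simp only [dotProduct, mulVec]
    fun_prop
  have hpdf : Measurable fun x => gaussianPDF C x *
      ENNReal.ofReal (Real.exp (1 / 2 * (x ⬝ᵥ G *ᵥ x))) :=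
    (measurable_gaussianPDF C).mul (measurable_ofReal_exp_quadratic G)
  rw [iidGaussian, withDensity_apply _ hmeas]
  calc ∫⁻ X in {X : Fin n → Fin p → ℝ | θ ≤ ∑ k, X k ⬝ᵥ G *ᵥ X k}, ∏ k, gaussianPDF C (X k)
      ≤ ∫⁻ X in {X : Fin n → Fin p → ℝ | θ ≤ ∑ k, X k ⬝ᵥ G *ᵥ X k},
          ENNReal.ofReal (Real.exp (-(1 / 2) * θ)) * ∏ k, (gaussianPDF C (X k) *
            ENNReal.ofReal (Real.exp (1 / 2 * (X k ⬝ᵥ G *ᵥ X k)))) := by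
        refine setLIntegral_mono' hmeas fun X hX => ?_
        rw [Finset.prod_mul_distrib, ← ENNReal.ofReal_prod_of_nonneg fun _ _ => (Real.exp_pos _).le,
          ← Real.exp_sum, ← Finset.mul_sum, mul_left_comm,
          ← ENNReal.ofReal_mul (Real.exp_pos _).le, ← Real.exp_add]
        refine le_mul_of_one_le_right' ?_
        rw [ENNReal.one_le_ofReal, Real.one_le_exp_iff]
        linarith [Set.mem_ofPred_eq ▸ hX]
    _ ≤ ∫⁻ X : Fin n → Fin p → ℝ,
          ENNReal.ofReal (Real.exp (-(1 / 2) * θ)) * ∏ k, (gaussianPDF C (X k) *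
            ENNReal.ofReal (Real.exp (1 / 2 * (X k ⬝ᵥ G *ᵥ X k)))) := setLIntegral_le_lintegral _ _
    _ = ENNReal.ofReal (Real.exp (-(1 / 2) * θ)) * (∫⁻ x, gaussianPDF C x *
            ENNReal.ofReal (Real.exp (1 / 2 * (x ⬝ᵥ G *ᵥ x)))) ^ n := by
        rw [lintegral_const_mul' _ _ ENNReal.ofReal_ne_top,
          lintegral_fin_prod_eq_prod (f := fun _ x => gaussianPDF C x *
            ENNReal.ofReal (Real.exp (1 / 2 * (x ⬝ᵥ G *ᵥ x)))) fun _ => hpdf]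
        simp
    _ ≤ _ := by
        rw [Real.exp_add, ENNReal.ofReal_mul (Real.exp_pos _).le, Real.exp_nat_mul,
          ENNReal.ofReal_pow (Real.exp_pos _).le]
        gcongr
        exact lintegral_gaussianPDF_mul_exp_quadratic_le hC hG hg0 hg hK hgK

theorem exists_chernoff_parameter {n : ℕ} {b u t : ℝ} (hn : 0 < n) (hb : 0 < b) (hu : 0 < u)
    (ht : t = max √(u * b / n) (2 * (u * b / n))) :
    ∃ μ : ℝ, 0 < μ ∧ 2 * μ * b ≤ 1 / 3 ∧ -(μ * n * t) + 3 / 4 * n * μ ^ 2 * b ≤ -u / 4 := by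
  have hn' : (0 : ℝ) < n := Nat.cast_pos.2 hn
  set r := u * b / n with hr
  have hr0 : 0 < r := by positivity
  have hrn : r * n = u * b := by rw [hr]; field_simp
  set q := √r with hq
  have hq0 : 0 < q := Real.sqrt_pos.2 hr0
  have hqq : q ^ 2 = r := Real.sq_sqrt hr0.le
  rcases le_total r (1 / 4) with h | h
  · have hq2 : q ≤ 1 / 2 := by nlinarith
    have htq : q ≤ t := ht ▸ le_max_left _ _
    refine ⟨q / (3 * b), by positivity, ?_, ?_⟩
    · have : 2 * (q / (3 * b)) * b = 2 / 3 * q := by field_simp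
      linarith
    · have h1 : q / (3 * b) * n * q ≤ q / (3 * b) * n * t := by gcongr
      have h2 : q / (3 * b) * n * q = u / 3 := by
        field_simp
        linear_combination n * hqq + hrn
      have h3 : 3 / 4 * n * (q / (3 * b)) ^ 2 * b = u / 12 := by
        field_simp
        linear_combination (12 * n) * hqq + 12 * hrn
      linarith
  · have htr : 2 * r ≤ t := ht ▸ le_max_right _ _
    refine ⟨1 / (6 * b), by positivity, ?_, ?_⟩
    · exact le_of_eq (by field_simp; norm_num)
    · have h1 : 1 / (6 * b) * n * (2 * r) ≤ 1 / (6 * b) * n * t := by gcongr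
      have h2 : 1 / (6 * b) * n * (2 * r) = u / 3 := by
        field_simp
        linear_combination 6 * hrn
      have h3 : 3 / 4 * n * (1 / (6 * b)) ^ 2 * b ≤ u / 12 := by
        have : 3 / 4 * n * (1 / (6 * b)) ^ 2 * b = n / (48 * b) := by field_simp; norm_num
        rw [this, div_le_div_iff₀ (by positivity) (by norm_num)]
        nlinarith
      linarith

/-- Upper tail of the empirical mean of a Gaussian quadratic form. -/
theorem iidGaussian_quadratic_tail {n p : ℕ} {C M : Matrix (Fin p) (Fin p) ℝ} {b K u t : ℝ}
    (hn : 0 < n) (hb : 0 < b) (hK : 0 < K) (hu : 0 < u)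
    (ht : t = max √(u * b / n) (2 * (u * b / n))) (hC : C.PosDef)
    (hCrow : ∀ i, ∑ j, |C i j| ≤ K) (hM : M.IsSymm) (hMrow : ∀ i, ∑ j, |M i j| ≤ b)
    (hMF : ∑ i, ∑ j, M i j ^ 2 ≤ b / 2) :
    iidGaussian n p C {X | n * ((M * C).trace + K * t) ≤ ∑ k, X k ⬝ᵥ M *ᵥ X k}
      ≤ ENNReal.ofReal (Real.exp (-u / 4)) := by
  obtain ⟨μ, hμ, hμb, hμt⟩ := exists_chernoff_parameter hn hb hu ht
  have hCs : C.IsSymm := by simpa [IsHermitian, IsSymm] using hC.isHermitian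
  have hc : 0 < 2 * μ / K := by positivity
  have hset : {X : Fin n → Fin p → ℝ | n * ((M * C).trace + K * t) ≤ ∑ k, X k ⬝ᵥ M *ᵥ X k}
      = {X | 2 * μ / K * (n * ((M * C).trace + K * t)) ≤
          ∑ k, X k ⬝ᵥ ((2 * μ / K) • M) *ᵥ X k} := by
    ext X
    simp only [Set.mem_ofPred_eq, smul_mulVec, dotProduct_smul, smul_eq_mul, ← Finset.mul_sum]
    exact (mul_le_mul_iff_right₀ hc).symm
  rw [hset]
  refine (iidGaussian_quadratic_chernoff (g := 2 * μ / K * b) (K := K) hC (hM.smul _)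
    (by positivity) (fun x => ?_)
    (fun x => (le_abs_self _).trans (abs_dotProduct_mulVec_le hCs hCrow x)) ?_ _).trans ?_
  · rw [smul_mulVec, dotProduct_smul, smul_eq_mul, abs_mul, abs_of_pos hc, mul_assoc]
    exact mul_le_mul_of_nonneg_left (abs_dotProduct_mulVec_le hM hMrow x) hc.le
  · exact le_of_eq_of_le (by field_simp) hμb
  · refine ENNReal.ofReal_le_ofReal (Real.exp_le_exp.2 (le_trans ?_ hμt))
    have htr := trace_mul_mul_self_le (M := M) hK.le hCs hCrow
    have htr' : ((M * C) * (M * C)).trace ≤ K ^ 2 * (b / 2) :=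
      htr.trans (mul_le_mul_of_nonneg_left hMF (by positivity))
    simp only [smul_mul_assoc, mul_smul_comm, trace_smul, smul_eq_mul]
    have hμK : 3 / 2 * n * (μ / K) ^ 2 * ((M * C) * (M * C)).trace
        ≤ 3 / 2 * n * (μ / K) ^ 2 * (K ^ 2 * (b / 2)) :=
      mul_le_mul_of_nonneg_left htr' (by positivity)
    have e1 : 3 / 2 * n * (μ / K) ^ 2 * (K ^ 2 * (b / 2)) = 3 / 4 * n * μ ^ 2 * b := by
      field_simp
      norm_num
    have e2 : -(1 / 2) * (2 * μ / K * (n * ((M * C).trace + K * t))) +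
        n * (1 / 2 * (2 * μ / K * (M * C).trace) +
          3 / 8 * (2 * μ / K * (2 * μ / K * ((M * C) * (M * C)).trace)))
        = -(μ * n * t) + 3 / 2 * n * (μ / K) ^ 2 * ((M * C) * (M * C)).trace := by
      field_simp
      ring
    linarith

theorem sum_fin_ite_val_eq (p a : ℕ) :
    ∑ j : Fin p, (if (j : ℕ) = a then (1 : ℝ) else 0) = if a < p then 1 else 0 := by
  rw [Fin.sum_univ_eq_sum_range (fun j => if j = a then (1 : ℝ) else 0), Finset.sum_ite_eq']
  simp

theorem sum_fin_ite_natAbs_eq {p l : ℕ} (hl : 1 ≤ l) (i : Fin p) :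
    ∑ j : Fin p, (if ((i : ℤ) - (j : ℤ)).natAbs = l then (1 : ℝ) else 0)
      = (if (i : ℕ) + l < p then 1 else 0) + (if l ≤ (i : ℕ) then 1 else 0) := by
  have hsplit (j : Fin p) : (if ((i : ℤ) - (j : ℤ)).natAbs = l then (1 : ℝ) else 0)
      = (if (j : ℕ) = i + l then 1 else 0) +
        (if l ≤ (i : ℕ) then (if (j : ℕ) = i - l then 1 else 0) else 0) := by
    split_ifs <;> first | omega | norm_num
  simp_rw [hsplit, Finset.sum_add_distrib, sum_fin_ite_val_eq]
  congr 1
  split_ifs with h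
  · rw [sum_fin_ite_val_eq, if_pos (by omega)]
  · simp

theorem sum_fin_lag_indicator {p l : ℕ} (hl : l ≤ p) :
    ∑ i : Fin p, ((if (i : ℕ) + l < p then (1 : ℝ) else 0) + (if l ≤ (i : ℕ) then 1 else 0))
      = 2 * ((p : ℝ) - l) := by
  have h1 : (Finset.range p).filter (fun i => i + l < p) = Finset.range (p - l) := by
    ext i; simp; omega
  have h2 : (Finset.range p).filter (fun i => l ≤ i) = Finset.Ico l p := by
    ext i; simp; omega
  rw [Finset.sum_add_distrib, Fin.sum_univ_eq_sum_range (fun i => if i + l < p then (1 : ℝ) else 0),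
    Fin.sum_univ_eq_sum_range (fun i => if l ≤ i then (1 : ℝ) else 0), Finset.sum_boole,
    Finset.sum_boole, h1, h2, Finset.card_range, Nat.card_Ico, Nat.cast_sub hl]
  ring

/-- Row sums of a banded Toeplitz array. -/
theorem sum_toeplitz_row {p S : ℕ} {f : ℕ → ℝ} (hf : ∀ d, S < d → d < p → f d = 0) (i : Fin p) :
    ∑ j : Fin p, f ((i : ℤ) - (j : ℤ)).natAbs = f 0 + ∑ l ∈ Finset.Icc 1 S,
      f l * ((if (i : ℕ) + l < p then 1 else 0) + (if l ≤ (i : ℕ) then 1 else 0)) := by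
  have hsplit (j : Fin p) : f ((i : ℤ) - (j : ℤ)).natAbs = (if j = i then f 0 else 0) +
      ∑ l ∈ Finset.Icc 1 S, f l * (if ((i : ℤ) - (j : ℤ)).natAbs = l then 1 else 0) := by
    simp only [mul_ite, mul_one, mul_zero, Finset.sum_ite_eq, Finset.mem_Icc]
    rcases eq_or_ne j i with rfl | hji
    · simp
    · have hne : (j : ℕ) ≠ i := fun h => hji (Fin.ext h)
      rw [if_neg hji, zero_add]
      split_ifs with h
      · rfl
      · exact hf _ (by omega) (by omega)
  simp_rw [hsplit, Finset.sum_add_distrib]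
  rw [Finset.sum_comm]
  congr 1
  · simp
  · refine Finset.sum_congr rfl fun l hl => ?_
    rw [← Finset.mul_sum, sum_fin_ite_natAbs_eq (Finset.mem_Icc.1 hl).1]

theorem sum_toeplitz_row_le {p S : ℕ} {f : ℕ → ℝ} (hf : ∀ d, S < d → d < p → f d = 0)
    (h0 : ∀ d, 0 ≤ f d) (i : Fin p) :
    ∑ j : Fin p, f ((i : ℤ) - (j : ℤ)).natAbs ≤ f 0 + 2 * ∑ l ∈ Finset.Icc 1 S, f l := by
  rw [sum_toeplitz_row hf, Finset.mul_sum]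
  refine add_le_add le_rfl (Finset.sum_le_sum fun l _ => ?_)
  rw [mul_comm]
  refine mul_le_mul_of_nonneg_right ?_ (h0 l)
  split_ifs <;> norm_num

theorem sum_toeplitz {p S : ℕ} (hS : S ≤ p) {f : ℕ → ℝ} (hf : ∀ d, S < d → d < p → f d = 0) :
    ∑ i : Fin p, ∑ j : Fin p, f ((i : ℤ) - (j : ℤ)).natAbs
      = p * f 0 + ∑ l ∈ Finset.Icc 1 S, f l * (2 * ((p : ℝ) - l)) := by
  simp_rw [sum_toeplitz_row hf, Finset.sum_add_distrib]
  rw [Finset.sum_comm]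
  congr 1
  · simp
  · refine Finset.sum_congr rfl fun l hl => ?_
    rw [← Finset.mul_sum, sum_fin_lag_indicator ((Finset.mem_Icc.1 hl).2.trans hS)]

/-- The symbol of the Toeplitz matrix `∑ j ∈ Icc 1 S, lagMatrix p j`. -/
noncomputable def lagWeight (p S d : ℕ) : ℝ :=
  if 1 ≤ d ∧ d ≤ S then 1 / (2 * ((p : ℝ) - d)) else 0

theorem sum_lagMatrix_apply (p S : ℕ) (i j : Fin p) :
    (∑ l ∈ Finset.Icc 1 S, lagMatrix p l) i j = lagWeight p S ((i : ℤ) - (j : ℤ)).natAbs := by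
  simp only [Matrix.sum_apply, lagMatrix, of_apply, lagWeight, ← Finset.mem_Icc]
  exact Finset.sum_ite_eq _ _ fun l : ℕ => 1 / (2 * ((p : ℝ) - l))

theorem lagWeight_zero (p S : ℕ) : lagWeight p S 0 = 0 := by simp [lagWeight]

theorem lagWeight_eq_zero {p S d : ℕ} (h : S < d) : lagWeight p S d = 0 := by
  rw [lagWeight, if_neg (by omega)]

theorem lagWeight_of_mem {p S l : ℕ} (hl : l ∈ Finset.Icc 1 S) :
    lagWeight p S l = 1 / (2 * ((p : ℝ) - l)) := if_pos (Finset.mem_Icc.1 hl)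

theorem sub_pos_of_mem_Icc {p S l : ℕ} (hS : S < p) (hl : l ∈ Finset.Icc 1 S) :
    (0 : ℝ) < p - l := by
  have : (l : ℝ) < p := by exact_mod_cast (Finset.mem_Icc.1 hl).2.trans_lt hS
  linarith

theorem lagWeight_nonneg {p S : ℕ} (hS : S < p) (d : ℕ) : 0 ≤ lagWeight p S d := by
  by_cases h : d ∈ Finset.Icc 1 S
  · have := sub_pos_of_mem_Icc hS h
    rw [lagWeight_of_mem h]
    positivity
  · rw [lagWeight, if_neg (by simpa using h)]

theorem sum_lagWeight_le {p S : ℕ} (hS : S < p) :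
    ∑ l ∈ Finset.Icc 1 S, lagWeight p S l ≤ S / ((p : ℝ) - S) / 2 := by
  have hpS : (0 : ℝ) < p - S := sub_pos.2 (Nat.cast_lt.2 hS)
  calc ∑ l ∈ Finset.Icc 1 S, lagWeight p S l
      ≤ ∑ _l ∈ Finset.Icc 1 S, 1 / (2 * ((p : ℝ) - S)) := by
        refine Finset.sum_le_sum fun l hl => ?_
        rw [lagWeight_of_mem hl]
        have : (l : ℝ) ≤ S := Nat.cast_le.2 (Finset.mem_Icc.1 hl).2
        gcongr
    _ = _ := by
        rw [Finset.sum_const, Nat.card_Icc, nsmul_eq_mul, Nat.add_sub_cancel]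
        field_simp

theorem isSymm_sum_lagMatrix (p S : ℕ) : (∑ l ∈ Finset.Icc 1 S, lagMatrix p l).IsSymm := by
  ext i j
  rw [transpose_apply, sum_lagMatrix_apply, sum_lagMatrix_apply, ← Int.natAbs_neg, neg_sub]

theorem sum_abs_sum_lagMatrix_le {p S : ℕ} (hS : S < p) (i : Fin p) :
    ∑ j, |(∑ l ∈ Finset.Icc 1 S, lagMatrix p l) i j| ≤ S / ((p : ℝ) - S) := by
  simp_rw [sum_lagMatrix_apply, abs_of_nonneg (lagWeight_nonneg hS _)]
  refine (sum_toeplitz_row_le (S := S) (fun d hd _ => lagWeight_eq_zero hd)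
    (lagWeight_nonneg hS) i).trans ?_
  linarith [sum_lagWeight_le hS, lagWeight_zero p S]

theorem sum_sq_sum_lagMatrix_le {p S : ℕ} (hS : S < p) :
    ∑ i, ∑ j, (∑ l ∈ Finset.Icc 1 S, lagMatrix p l) i j ^ 2 ≤ S / ((p : ℝ) - S) / 2 := by
  simp_rw [sum_lagMatrix_apply]
  rw [sum_toeplitz hS.le (f := fun d => lagWeight p S d ^ 2)
    fun d hd _ => by simp [lagWeight_eq_zero hd]]
  refine le_of_eq_of_le ?_ (sum_lagWeight_le hS)
  rw [lagWeight_zero, zero_pow two_ne_zero, mul_zero, zero_add]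
  refine Finset.sum_congr rfl fun l hl => ?_
  have := sub_pos_of_mem_Icc hS hl
  rw [lagWeight_of_mem hl]
  field_simp

theorem trace_sum_lagMatrix (p S : ℕ) : (∑ l ∈ Finset.Icc 1 S, lagMatrix p l).trace = 0 := by
  refine Finset.sum_eq_zero fun i _ => ?_
  rw [diag_apply, sum_lagMatrix_apply, sub_self, Int.natAbs_zero, lagWeight_zero]

theorem trace_sum_lagMatrix_mul {p S : ℕ} (hS : S < p) {C : Matrix (Fin p) (Fin p) ℝ} {v : ℕ → ℝ}
    (hC : ∀ i j : Fin p, C i j = v ((i : ℤ) - (j : ℤ)).natAbs) :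
    ((∑ l ∈ Finset.Icc 1 S, lagMatrix p l) * C).trace = ∑ l ∈ Finset.Icc 1 S, v l := by
  have hswap (i j : Fin p) : C j i = v ((i : ℤ) - (j : ℤ)).natAbs := by
    rw [hC, ← Int.natAbs_neg, neg_sub]
  simp only [trace, diag_apply, mul_apply, sum_lagMatrix_apply, hswap]
  rw [sum_toeplitz hS.le (f := fun d => lagWeight p S d * v d)
    fun d hd _ => by simp [lagWeight_eq_zero hd]]
  rw [lagWeight_zero, zero_mul, mul_zero, zero_add]
  refine Finset.sum_congr rfl fun l hl => ?_
  have := sub_pos_of_mem_Icc hS hl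
  rw [lagWeight_of_mem hl]
  field_simp

theorem trace_mul_sampleCov_sub_one {n p : ℕ} (A : Matrix (Fin p) (Fin p) ℝ)
    (X : Fin n → Fin p → ℝ) :
    (A * (sampleCov X - 1)).trace = (n : ℝ)⁻¹ * ∑ k, X k ⬝ᵥ A *ᵥ X k - A.trace := by
  have hterm (k : Fin n) :
      (A * Matrix.of fun i j => X k i * X k j).trace = X k ⬝ᵥ A *ᵥ X k := by
    simp only [trace, diag_apply, mul_apply, of_apply, dotProduct, mulVec, Finset.mul_sum]
    exact Finset.sum_congr rfl fun i _ => Finset.sum_congr rfl fun j _ => by ring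
  rw [mul_sub, mul_one, trace_sub, sampleCov, mul_smul_comm, trace_smul, Finset.mul_sum, trace_sum,
    smul_eq_mul]
  simp_rw [hterm]

/-- Off-diagonal values of a positive definite Toeplitz matrix with unit diagonal are below `1`. -/
theorem toeplitz_lt_one {p d : ℕ} (hd : 1 ≤ d) (hdp : d < p) {C : Matrix (Fin p) (Fin p) ℝ}
    {v : ℕ → ℝ} (hC : C.PosDef) (hv0 : v 0 = 1)
    (hv : ∀ i j : Fin p, C i j = v ((i : ℤ) - (j : ℤ)).natAbs) : v d < 1 := by
  let i : Fin p := ⟨0, by omega⟩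
  let j : Fin p := ⟨d, hdp⟩
  have hij : i ≠ j := by simp [i, j, Fin.ext_iff]; omega
  have hx : (Pi.single i 1 - Pi.single j 1 : Fin p → ℝ) ≠ 0 := fun h => by
    simpa [hij] using congrFun h i
  have h := hC.dotProduct_mulVec_pos hx
  rw [star_trivial, mulVec_sub, sub_dotProduct, dotProduct_sub, dotProduct_sub] at h
  simp only [mulVec_single_one, single_one_dotProduct, col_apply, hv] at h
  simp [i, j, hv0] at h
  linarith

theorem iidGaussian_null_reject_le {p n S : ℕ} (hn : 0 < n) (hS0 : 0 < S) (hS : S < p) {u t : ℝ}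
    (hu : 0 < u)
    (ht : t = max √(u * (S / ((p : ℝ) - S)) / n) (2 * (u * (S / ((p : ℝ) - S)) / n))) :
    iidGaussian n p 1 {X | ((∑ j ∈ Finset.Icc 1 S, lagMatrix p j) * (sampleCov X - 1)).trace ≥ t}
      ≤ ENNReal.ofReal (Real.exp (-u / 4)) := by
  have hpS : (0 : ℝ) < p - S := sub_pos.2 (Nat.cast_lt.2 hS)
  have hn' : (0 : ℝ) < n := Nat.cast_pos.2 hn
  have hS0' : (0 : ℝ) < S := Nat.cast_pos.2 hS0
  refine (measure_mono fun X hX => ?_).trans (iidGaussian_quadratic_tail hn (by positivity)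
    one_pos hu ht PosDef.one (fun i => ?_) (isSymm_sum_lagMatrix p S)
    (sum_abs_sum_lagMatrix_le hS) (sum_sq_sum_lagMatrix_le hS))
  · rw [Set.mem_ofPred_eq, trace_mul_sampleCov_sub_one, trace_sum_lagMatrix, sub_zero, ge_iff_le,
      ← div_eq_inv_mul, le_div_iff₀ hn'] at hX
    rw [Set.mem_ofPred_eq, mul_one, trace_sum_lagMatrix, zero_add, one_mul, mul_comm]
    exact hX
  · simp [one_apply, apply_ite]

theorem iidGaussian_alternative_accept_le {p n s S : ℕ} (hn : 0 < n) (hs : 1 ≤ s) (hsS : s ≤ S)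
    (hS : S < p) {u σ t : ℝ} (hu : 0 < u)
    (ht : t = max √(u * (S / ((p : ℝ) - S)) / n) (2 * (u * (S / ((p : ℝ) - S)) / n)))
    (hσ : σ ≥ 2 * ((s : ℝ) + 1) / s * t) {C : Matrix (Fin p) (Fin p) ℝ}
    (hC : memFplus p s S σ 1 C) :
    iidGaussian n p C {X | ((∑ j ∈ Finset.Icc 1 S, lagMatrix p j) * (sampleCov X - 1)).trace < t}
      ≤ ENNReal.ofReal (Real.exp (-u / 4)) := by
  obtain ⟨hpd, v, hv0, hv, T, hTS, hTs, hTσ, hTv⟩ := hC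
  have hpS : (0 : ℝ) < p - S := sub_pos.2 (Nat.cast_lt.2 hS)
  have hn' : (0 : ℝ) < n := Nat.cast_pos.2 hn
  have hs' : (0 : ℝ) < s := Nat.cast_pos.2 hs
  have hS0' : (0 : ℝ) < S := Nat.cast_pos.2 (hs.trans hsS)
  have ht0 : 0 < t := by
    rw [ht]
    exact lt_max_of_lt_right (by positivity)
  have hσ0 : 0 < σ := lt_of_lt_of_le (by positivity) hσ
  have hσs : 2 * (s + 1) * t ≤ s * σ := by
    rw [ge_iff_le, div_mul_eq_mul_div, div_le_iff₀ hs'] at hσ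
    linarith
  obtain ⟨d, hd⟩ : T.Nonempty := Finset.card_pos.1 (by omega)
  have hdS := Finset.mem_Icc.1 (hTS hd)
  have hσ1 : σ < 1 :=
    (hTσ d hd).trans_lt (toeplitz_lt_one hdS.1 (hdS.2.trans_lt hS) hpd hv0 hv)
  set m := ∑ l ∈ Finset.Icc 1 S, v l with hm
  have hmT : m = ∑ l ∈ T, v l := by
    refine (Finset.sum_subset hTS fun l hl hlT => ?_).symm
    have := Finset.mem_Icc.1 hl
    exact hTv l this.1 (by omega) hlT
  have hsm : s * σ ≤ m := by
    rw [hmT, ← hTs, ← nsmul_eq_mul]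
    exact Finset.card_nsmul_le_sum _ _ _ hTσ
  have hm0 : 0 < m := lt_of_lt_of_le (by positivity) hsm
  have hkey : (2 + 2 * m) * t ≤ m := by
    have h1 : 2 * (s + 1) * t * m ≤ s * m :=
      mul_le_mul_of_nonneg_right (by nlinarith) hm0.le
    refine le_of_mul_le_mul_right (?_ : _ ≤ m * (s + 1)) (by positivity)
    linarith
  have hvabs : ∑ l ∈ Finset.Icc 1 S, |v l| = m := by
    refine Finset.sum_congr rfl fun l hl => abs_of_nonneg ?_
    have hl' := Finset.mem_Icc.1 hl
    by_cases hlT : l ∈ T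
    · exact hσ0.le.trans (hTσ l hlT)
    · exact (hTv l hl'.1 (by omega) hlT).ge
  refine (measure_mono fun X hX => ?_).trans (iidGaussian_quadratic_tail
    (M := -∑ j ∈ Finset.Icc 1 S, lagMatrix p j) (K := 1 + 2 * m) hn (by positivity)
    (by positivity) hu ht hpd (fun i => ?_) (isSymm_sum_lagMatrix p S).neg
    (fun i => ?_) ?_)
  · rw [Set.mem_ofPred_eq, trace_mul_sampleCov_sub_one, trace_sum_lagMatrix, sub_zero,
      ← div_eq_inv_mul, div_lt_iff₀ hn'] at hX
    simp only [Set.mem_ofPred_eq, neg_mul, trace_neg, trace_sum_lagMatrix_mul hS hv, neg_mulVec,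
      dotProduct_neg, Finset.sum_neg_distrib, ← hm]
    nlinarith
  · simp_rw [hv]
    refine (sum_toeplitz_row_le (S := S) (f := fun d => |v d|) (fun d hd hdp => ?_)
      (fun _ => abs_nonneg _) i).trans_eq ?_
    · have hdT : d ∉ T := fun h => by have := Finset.mem_Icc.1 (hTS h); omega
      simp [hTv d (by omega) (by omega) hdT]
    · rw [hvabs, hv0, abs_one]
  · simp only [Matrix.neg_apply, abs_neg]
    exact sum_abs_sum_lagMatrix_le hS i
  · simp only [Matrix.neg_apply, neg_sq]
    exact sum_sq_sum_lagMatrix_le hS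

/-- Risk bound for the one-sided moderately-sparse test `Δ^{MS+}`. -/
theorem test_MS_plus_risk {p n s S : ℕ} (hn : 0 < n) (hs : 1 ≤ s) (hsS : s ≤ S)
    (hS : (S : ℝ) < (p:ℝ)/2) (u σ t : ℝ) (hu : 0 < u)
    (ht : t = max (Real.sqrt (u * S / (n * ((p:ℝ) - S)))) (2 * u * S / (n * ((p:ℝ) - S))))
    (hσ : σ ≥ (2 * ((s:ℝ) + 1) / s) * t) :
    (iidGaussian n p 1) {X |
        Matrix.trace ((∑ j ∈ Finset.Icc 1 S, lagMatrix p j) * (sampleCov X - 1)) ≥ t}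
    + ⨆ (Cov : Matrix (Fin p) (Fin p) ℝ) (_ : memFplus p s S σ 1 Cov),
        (iidGaussian n p Cov) {X |
          Matrix.trace ((∑ j ∈ Finset.Icc 1 S, lagMatrix p j) * (sampleCov X - 1)) < t}
    ≤ ENNReal.ofReal (2 * Real.exp (-u/4)) := by
  have hSp : S < p := by
    have h2 : (S : ℝ) < p := by linarith [(Nat.cast_nonneg S : (0 : ℝ) ≤ S)]
    exact_mod_cast h2
  have hpS : (p : ℝ) - S ≠ 0 := (sub_pos.2 (Nat.cast_lt.2 hSp)).ne'
  have hr : u * S / (n * ((p : ℝ) - S)) = u * (S / ((p : ℝ) - S)) / n := by field_simp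
  have ht' : t = max √(u * (S / ((p : ℝ) - S)) / n) (2 * (u * (S / ((p : ℝ) - S)) / n)) := by
    rw [ht, ← hr, mul_assoc 2 u, mul_div_assoc 2]
  rw [two_mul, ENNReal.ofReal_add (Real.exp_pos _).le (Real.exp_pos _).le]
  exact add_le_add (iidGaussian_null_reject_le hn (hs.trans hsS) hSp hu ht')
    (iSup₂_le fun _ hC => iidGaussian_alternative_accept_le hn hs hsS hSp hu ht' hσ hC)
end
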